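/- arXiv:2405.00730 — 7 statements merged into one kernel-verified Lean document; each statement's English description precedes it below -/
import Mathlib

section
/- Let V₁, V₂ be bounded symmetric bilinear forms on H¹(ℝ), and suppose m(V₁) ≠ −∞ or m(V₂) ≠ −∞. Then inf_{u∈H¹(ℝ), u≠0} (V₁−V₂)(u,u)/‖u‖_∞² ≤ m(V₁) − m(V₂) ≤ sup_{u∈H¹(ℝ), u≠0} (V₁−V₂)(u,u)/‖u‖_∞² (comparison principle for m). -/
open MeasureTheory Filter Real Topology

/-- The supremum norm `‖u‖_∞` of a (bounded continuous) function `u : ℝ → ℝ`. -/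
noncomputable def supNorm (u : ℝ → ℝ) : ℝ := ⨆ x : ℝ, |u x|

/-- `u` is (the continuous representative of) an element of `H¹(ℝ)`:
`u` is continuous, `u ∈ L²(ℝ)`, and there is a weak derivative `u' ∈ L²(ℝ)`,
i.e. `u x = u 0 + ∫_0^x u'`. -/
def IsH1 (u : ℝ → ℝ) : Prop :=
  Continuous u ∧ MemLp u 2 (volume : Measure ℝ) ∧
    ∃ u' : ℝ → ℝ, MemLp u' 2 (volume : Measure ℝ) ∧
      ∀ x : ℝ, u x = u 0 + ∫ t in (0:ℝ)..x, u' t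

/-- The Dirichlet energy `∫_ℝ |u'(x)|² dx`.  (For `u ∈ H¹(ℝ)` the classical
derivative `deriv u` exists a.e. and coincides a.e. with the weak derivative.) -/
noncomputable def energy (u : ℝ → ℝ) : ℝ := ∫ x : ℝ, (deriv u x) ^ 2

/-- The `H¹(ℝ)` norm `(∫ |u|² + ∫ |u'|²)^{1/2}`. -/
noncomputable def h1Norm (u : ℝ → ℝ) : ℝ :=
  Real.sqrt ((∫ x : ℝ, (u x) ^ 2) + energy u)

/-- A bounded symmetric bilinear form on `H¹(ℝ)`. -/
structure BddSymmBilinearForm where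
  B : (ℝ → ℝ) → (ℝ → ℝ) → ℝ
  symm : ∀ u v, IsH1 u → IsH1 v → B u v = B v u
  add_left : ∀ u v w, IsH1 u → IsH1 v → IsH1 w → B (u + v) w = B u w + B v w
  smul_left : ∀ (c : ℝ) (u v : ℝ → ℝ), IsH1 u → IsH1 v → B (c • u) v = c * B u v
  bounded : ∃ C : ℝ, ∀ u v, IsH1 u → IsH1 v → |B u v| ≤ C * h1Norm u * h1Norm v

/-- `I(u;V) = ∫_ℝ |u'(x)|² dx + V(u,u)` for a bounded symmetric bilinear form `V`. -/
noncomputable def IB (V : BddSymmBilinearForm) (u : ℝ → ℝ) : ℝ := energy u + V.B u u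

/-- Membership in `K_a = { u ∈ H¹(ℝ) ; u(a) = ‖u‖_∞ = 1 }`. -/
def InKa (a : ℝ) (u : ℝ → ℝ) : Prop := IsH1 u ∧ u a = 1 ∧ supNorm u = 1

/-- `m(V) = inf { I(u;V)/‖u‖_∞² ; u ∈ H¹(ℝ), u ≢ 0 }`, as a value in `[-∞,∞)` (extended reals). -/
noncomputable def mB (V : BddSymmBilinearForm) : EReal :=
  sInf {r : EReal | ∃ u : ℝ → ℝ, IsH1 u ∧ u ≠ 0 ∧
    r = ((IB V u / (supNorm u) ^ 2 : ℝ) : EReal)}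

/-- `F(a;V) = inf { I(u;V) ; u ∈ K_a }`, as a value in `[-∞,∞)` (extended reals). -/
noncomputable def FB (V : BddSymmBilinearForm) (a : ℝ) : EReal :=
  sInf {r : EReal | ∃ u : ℝ → ℝ, InKa a u ∧ r = ((IB V u : ℝ) : EReal)}

theorem exists_h1 : ∃ u : ℝ → ℝ, IsH1 u ∧ u ≠ 0 := by
  let f : ContDiffBump (0 : ℝ) := ⟨1, 2, one_pos, one_lt_two⟩
  have hc : ContDiff ℝ 1 f := f.contDiff
  have hs : HasCompactSupport f := f.hasCompactSupport
  have hd : Continuous (deriv f) := hc.continuous_deriv le_rfl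
  refine ⟨f, ⟨hc.continuous, hc.continuous.memLp_of_hasCompactSupport hs,
    deriv f, hd.memLp_of_hasCompactSupport hs.deriv, fun x => ?_⟩, ?_⟩
  · rw [intervalIntegral.integral_deriv_eq_sub
      (fun y _ => (hc.differentiable one_ne_zero) y) (hd.intervalIntegrable _ _)]
    ring
  · intro h0
    have h1 : f (0 : ℝ) = 1 :=
      f.one_of_mem_closedBall (Metric.mem_closedBall_self f.rIn_pos.le)
    rw [h0] at h1
    simp at h1

theorem comparison_aux {α : Type*} (P : α → Prop) (hP : ∃ a, P a) (a b g : α → ℝ)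
    (hab : ∀ u, P u → a u = b u + g u) (m₁ m₂ i s : EReal)
    (h1 : m₁ = sInf {r : EReal | ∃ u, P u ∧ r = (a u : EReal)})
    (h2 : m₂ = sInf {r : EReal | ∃ u, P u ∧ r = (b u : EReal)})
    (hi : i = sInf {r : EReal | ∃ u, P u ∧ r = (g u : EReal)})
    (hs : s = sSup {r : EReal | ∃ u, P u ∧ r = (g u : EReal)})
    (h : m₁ ≠ ⊥ ∨ m₂ ≠ ⊥) : i ≤ m₁ - m₂ ∧ m₁ - m₂ ≤ s := by
  have l1 : ∀ u, P u → m₁ ≤ (a u : EReal) := fun u hu => h1 ▸ sInf_le ⟨u, hu, rfl⟩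
  have l2 : ∀ u, P u → m₂ ≤ (b u : EReal) := fun u hu => h2 ▸ sInf_le ⟨u, hu, rfl⟩
  have li : ∀ u, P u → i ≤ (g u : EReal) := fun u hu => hi ▸ sInf_le ⟨u, hu, rfl⟩
  have ls : ∀ u, P u → (g u : EReal) ≤ s := fun u hu => hs ▸ le_sSup ⟨u, hu, rfl⟩
  have g1 : ∀ c : EReal, (∀ u, P u → c ≤ (a u : EReal)) → c ≤ m₁ := by
    intro c hc
    rw [h1]
    refine le_sInf ?_
    rintro _ ⟨u, hu, rfl⟩
    exact hc u hu
  have g2 : ∀ c : EReal, (∀ u, P u → c ≤ (b u : EReal)) → c ≤ m₂ := by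
    intro c hc
    rw [h2]
    refine le_sInf ?_
    rintro _ ⟨u, hu, rfl⟩
    exact hc u hu
  clear h1 h2 hi hs
  obtain ⟨w, hw⟩ := hP
  have l1w := l1 w hw
  have l2w := l2 w hw
  have liw := li w hw
  have lsw := ls w hw
  constructor
  · induction m₂ with
    | top => simp at l2w
    | bot =>
      induction m₁ with
      | top => simp at l1w
      | bot => simp at h
      | coe x => simp
    | coe y =>
      induction i with
      | top => simp at liw
      | bot => simp
      | coe z =>
        have key : ((z + y : ℝ) : EReal) ≤ m₁ := g1 _ fun u hu => by
          have e1 := EReal.coe_le_coe_iff.1 (li u hu)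
          have e2 := EReal.coe_le_coe_iff.1 (l2 u hu)
          rw [EReal.coe_le_coe_iff, hab u hu]
          linarith
        induction m₁ with
        | top => simp at l1w
        | bot => exact absurd (le_bot_iff.1 key) (EReal.coe_ne_bot _)
        | coe x =>
          rw [← EReal.coe_sub, EReal.coe_le_coe_iff]
          rw [EReal.coe_le_coe_iff] at key
          linarith
  · induction s with
    | top => simp
    | bot => simp at lsw
    | coe z =>
      induction m₁ with
      | top => simp at l1w
      | bot => simp
      | coe x =>
        have key : ((x - z : ℝ) : EReal) ≤ m₂ := g2 _ fun u hu => by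
          have e1 := EReal.coe_le_coe_iff.1 (ls u hu)
          have e2 := EReal.coe_le_coe_iff.1 (l1 u hu)
          rw [hab u hu] at e2
          rw [EReal.coe_le_coe_iff]
          linarith
        induction m₂ with
        | top => simp at l2w
        | bot => exact absurd (le_bot_iff.1 key) (EReal.coe_ne_bot _)
        | coe y =>
          rw [← EReal.coe_sub, EReal.coe_le_coe_iff]
          rw [EReal.coe_le_coe_iff] at key
          linarith

/-- **Comparison principle for `m`.** For bounded symmetric bilinear forms `V₁, V₂` on
`H¹(ℝ)` with `m(V₁) ≠ -∞` or `m(V₂) ≠ -∞`: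
`inf_u (V₁-V₂)(u,u)/‖u‖_∞² ≤ m(V₁) - m(V₂) ≤ sup_u (V₁-V₂)(u,u)/‖u‖_∞²`
(in the extended reals). -/
theorem comparison_principle (V₁ V₂ : BddSymmBilinearForm)
    (h : mB V₁ ≠ ⊥ ∨ mB V₂ ≠ ⊥) :
    sInf {r : EReal | ∃ u : ℝ → ℝ, IsH1 u ∧ u ≠ 0 ∧
        r = (((V₁.B u u - V₂.B u u) / (supNorm u) ^ 2 : ℝ) : EReal)}
      ≤ mB V₁ - mB V₂ ∧
    mB V₁ - mB V₂ ≤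
      sSup {r : EReal | ∃ u : ℝ → ℝ, IsH1 u ∧ u ≠ 0 ∧
        r = (((V₁.B u u - V₂.B u u) / (supNorm u) ^ 2 : ℝ) : EReal)} := by
  refine comparison_aux (fun u : ℝ → ℝ => IsH1 u ∧ u ≠ 0) exists_h1
    (fun u => IB V₁ u / (supNorm u) ^ 2) (fun u => IB V₂ u / (supNorm u) ^ 2)
    (fun u => (V₁.B u u - V₂.B u u) / (supNorm u) ^ 2) ?_ _ _ _ _ ?_ ?_ ?_ ?_ h
  · intro u _
    simp only [IB]
    ring
  all_goals simp only [mB, and_assoc]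
end

section
/- Let V ∈ L^∞(ℝ) with ess inf_{x∈ℝ} V(x) > 0, and suppose m(V) = lim_{a→∞} F(a;V) or m(V) = lim_{a→−∞} F(a;V). Let p ∈ [1,∞) and let μ = μ₀ + μ₁ with μ₀ ∈ L^p(ℝ) and μ₁ a signed Radon measure on ℝ of finite total variation, and suppose μ is nonnegative as a bilinear form, i.e., ∫_ℝ μ₀ u² dx + ∫_ℝ u² dμ₁ ≥ 0 for all u ∈ H¹(ℝ). Then m(V+μ) = m(V) and M(V+μ) ⊆ M(V). -/
open MeasureTheory Filter Real Topology

/-- `I(u;V) = ∫_ℝ (|u'(x)|² + V(x)|u(x)|²) dx` for a potential `V : ℝ → ℝ`. -/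
noncomputable def IV (V : ℝ → ℝ) (u : ℝ → ℝ) : ℝ :=
  ∫ x : ℝ, ((deriv u x) ^ 2 + V x * (u x) ^ 2)

/-- `F(a;V) = inf { I(u;V) ; u ∈ K_a }`. -/
noncomputable def FV (V : ℝ → ℝ) (a : ℝ) : ℝ :=
  sInf {r : ℝ | ∃ u : ℝ → ℝ, InKa a u ∧ r = IV V u}

/-- `m(V) = inf { I(u;V)/‖u‖_∞² ; u ∈ H¹(ℝ), u ≢ 0 }`. -/
noncomputable def mV (V : ℝ → ℝ) : ℝ :=
  sInf {r : ℝ | ∃ u : ℝ → ℝ, IsH1 u ∧ u ≠ 0 ∧ r = IV V u / (supNorm u) ^ 2}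

/-- Integral of `f` against a finite signed Radon measure `μ`, via its Jordan
decomposition `μ = μ₊ - μ₋`. -/
noncomputable def sMeasInt (μ : SignedMeasure ℝ) (f : ℝ → ℝ) : ℝ :=
  (∫ x, f x ∂μ.toJordanDecomposition.posPart) -
    (∫ x, f x ∂μ.toJordanDecomposition.negPart)

/-- `I(u;V+μ)` for the perturbation `μ = μ₀ + μ₁` with `μ₀ ∈ L^p(ℝ)` and
`μ₁` a finite signed measure. -/
noncomputable def IVmu (V : ℝ → ℝ) (μ₀ : ℝ → ℝ) (μ₁ : SignedMeasure ℝ) (u : ℝ → ℝ) : ℝ :=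
  IV V u + (∫ x : ℝ, μ₀ x * (u x) ^ 2) + sMeasInt μ₁ (fun x => (u x) ^ 2)

/-- `m(V+μ)`. -/
noncomputable def mVmu (V : ℝ → ℝ) (μ₀ : ℝ → ℝ) (μ₁ : SignedMeasure ℝ) : ℝ :=
  sInf {r : ℝ | ∃ u : ℝ → ℝ, IsH1 u ∧ u ≠ 0 ∧ r = IVmu V μ₀ μ₁ u / (supNorm u) ^ 2}


/-- cutoff -/
noncomputable def chi (η a x : ℝ) : ℝ := (1 + (η * (x - a)) ^ 2)⁻¹

lemma chi_pos (η a x : ℝ) : 0 < chi η a x := by unfold chi; positivity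

lemma chi_le_one (η a x : ℝ) : chi η a x ≤ 1 := by
  unfold chi; exact inv_le_one_of_one_le₀ (by nlinarith [sq_nonneg (η * (x - a))])

lemma chi_self (η a : ℝ) : chi η a a = 1 := by simp [chi]

lemma chi_hasDeriv (η a x : ℝ) :
    HasDerivAt (chi η a) (-(2 * η * (η * (x - a))) * (chi η a x) ^ 2) x := by
  unfold chi
  have h1 : HasDerivAt (fun x => 1 + (η * (x - a)) ^ 2) (2 * η * (η * (x - a))) x := by
    have := ((((hasDerivAt_id x).sub_const a).const_mul η).pow 2).const_add 1
    convert! this using 1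
    simp; ring
  have h2 := h1.inv (by positivity)
  convert! h2 using 1
  field_simp

lemma chi_deriv_bound {η : ℝ} (hη : 0 ≤ η) (a x : ℝ) :
    |deriv (chi η a) x| ≤ η * chi η a x := by
  rw [(chi_hasDeriv η a x).deriv, abs_mul, abs_neg, abs_of_nonneg (sq_nonneg (chi η a x)), pow_two,
    ← mul_assoc]
  refine mul_le_mul_of_nonneg_right ?_ (chi_pos η a x).le
  unfold chi
  rw [← div_eq_mul_inv, div_le_iff₀ (by positivity), abs_mul, abs_of_nonneg (by positivity : 0 ≤ 2*η)]
  nlinarith [sq_nonneg (|η * (x - a)| - 1), sq_abs (η * (x - a))]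

lemma chi_cont (η a : ℝ) : Continuous (chi η a) :=
  continuous_iff_continuousAt.2 fun x => (chi_hasDeriv η a x).continuousAt

lemma chi_deriv_cont (η a : ℝ) : Continuous (deriv (chi η a)) := by
  have : deriv (chi η a) = fun x => (-(2 * η * (η * (x - a))) * (chi η a x) ^ 2) :=
    funext fun x => (chi_hasDeriv η a x).deriv
  rw [this]
  have := chi_cont η a
  fun_prop

lemma chi_ftc (η a x : ℝ) : chi η a x = chi η a 0 + ∫ t in (0:ℝ)..x, deriv (chi η a) t := by
  rw [intervalIntegral.integral_deriv_eq_sub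
    (fun y _ => (chi_hasDeriv η a y).differentiableAt)
    ((chi_deriv_cont η a).intervalIntegrable _ _)]
  ring

lemma chi_memLp (a : ℝ) : MemLp (chi 1 a) 2 (volume : Measure ℝ) := by
  rw [memLp_two_iff_integrable_sq (chi_cont 1 a).aestronglyMeasurable]
  have h1 : Integrable (fun x => chi 1 a x) := by
    have := integrable_inv_one_add_sq.comp_sub_right a
    simpa [chi] using this
  refine h1.mono' ((chi_cont 1 a).pow 2).aestronglyMeasurable (ae_of_all _ fun x => ?_)
  have := chi_pos 1 a x
  have := chi_le_one 1 a x
  rw [Real.norm_of_nonneg (by positivity)]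
  nlinarith

lemma supNorm_eq_one {u : ℝ → ℝ} {a : ℝ} (h1 : u a = 1) (h : ∀ x, |u x| ≤ 1) : supNorm u = 1 := by
  unfold supNorm
  apply le_antisymm (ciSup_le h)
  have := le_ciSup (f := fun x => |u x|) ⟨1, by rintro _ ⟨x, rfl⟩; exact h x⟩ a
  simpa [h1] using this

lemma le_of_supNorm {u : ℝ → ℝ} (h : supNorm u = 1) (x : ℝ) : |u x| ≤ 1 := by
  unfold supNorm at h
  rw [← h]
  refine le_ciSup (f := fun x => |u x|) ?_ x
  by_contra hb
  rw [Real.iSup_of_not_bddAbove hb] at h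
  norm_num at h

lemma chi_inKa (a : ℝ) : InKa a (chi 1 a) := by
  refine ⟨⟨chi_cont 1 a, chi_memLp a, deriv (chi 1 a), ?_, chi_ftc 1 a⟩, chi_self 1 a,
    supNorm_eq_one (chi_self 1 a) fun x => ?_⟩
  · refine (chi_memLp a).mono (chi_deriv_cont 1 a).aestronglyMeasurable (ae_of_all _ fun x => ?_)
    have := chi_deriv_bound zero_le_one a x
    rw [Real.norm_eq_abs, Real.norm_of_nonneg (chi_pos 1 a x).le]
    linarith
  · rw [abs_of_pos (chi_pos 1 a x)]; exact chi_le_one 1 a x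

lemma InKa.ne_zero {a : ℝ} {u : ℝ → ℝ} (h : InKa a u) : u ≠ 0 := by
  rintro rfl
  simpa using h.2.1

/-- a.e. differentiability -/
lemma IsH1.ae_deriv {u : ℝ → ℝ} (hu : IsH1 u) :
    (∀ᵐ x, DifferentiableAt ℝ u x) ∧ MemLp (deriv u) 2 (volume : Measure ℝ) ∧
      ∀ x, AbsolutelyContinuousOnInterval u 0 x := by
  obtain ⟨hc, h2, u', hu', hf⟩ := hu
  have hl : LocallyIntegrable u' volume := hu'.locallyIntegrable (by norm_num)
  have hd : ∀ᵐ x, HasDerivAt u (u' x) x := by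
    filter_upwards [LocallyIntegrable.ae_hasDerivAt_integral hl] with x hx
    have := (hx 0).const_add (u 0)
    rwa [← funext hf] at this
  refine ⟨hd.mono fun x hx => hx.differentiableAt, ?_, fun x => ?_⟩
  · refine (memLp_congr_ae ?_).1 hu'
    filter_upwards [hd] with x hx using hx.deriv.symm
  · have hi : IntervalIntegrable u' volume 0 x := intervalIntegrable_iff.2
      ((hl.integrableOn_isCompact isCompact_uIcc).mono_set Set.uIoc_subset_uIcc)
    have h1 := hi.absolutelyContinuousOnInterval_intervalIntegral (c := 0) (by simp)
    have h2 : AbsolutelyContinuousOnInterval (fun _ : ℝ => u 0) 0 x :=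
      (LipschitzWith.const (u 0)).lipschitzOnWith.absolutelyContinuousOnInterval
    have h3 := h2.add h1
    rw [funext hf]
    exact h3

lemma chi_ac (η a x : ℝ) : AbsolutelyContinuousOnInterval (chi η a) 0 x := by
  have hi : IntervalIntegrable (deriv (chi η a)) volume 0 x :=
    (chi_deriv_cont η a).intervalIntegrable _ _
  have h1 := hi.absolutelyContinuousOnInterval_intervalIntegral (c := 0) (by simp)
  have h2 : AbsolutelyContinuousOnInterval (fun _ : ℝ => chi η a 0) 0 x :=
    (LipschitzWith.const (chi η a 0)).lipschitzOnWith.absolutelyContinuousOnInterval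
  have h3 := h2.add h1
  rw [funext (chi_ftc η a)]
  exact h3

lemma IsH1.mul_chi {u : ℝ → ℝ} (hu : IsH1 u) {η : ℝ} (hη : 0 ≤ η) (a : ℝ) :
    IsH1 (fun x => u x * chi η a x) := by
  obtain ⟨hd, h2, hac⟩ := hu.ae_deriv
  have hm : MemLp (fun x => u x * chi η a x) 2 (volume : Measure ℝ) := by
    refine hu.2.1.mono (hu.1.mul (chi_cont η a)).aestronglyMeasurable (ae_of_all _ fun x => ?_)
    rw [norm_mul, Real.norm_of_nonneg (chi_pos η a x).le]
    exact mul_le_of_le_one_right (norm_nonneg _) (chi_le_one η a x)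
  refine ⟨hu.1.mul (chi_cont η a), hm,
    fun x => deriv u x * chi η a x + u x * deriv (chi η a) x, ?_, fun x => ?_⟩
  · refine MemLp.add ?_ ?_
    · refine h2.mono (h2.1.mul (chi_cont η a).aestronglyMeasurable) (ae_of_all _ fun x => ?_)
      rw [norm_mul, Real.norm_of_nonneg (chi_pos η a x).le]
      exact mul_le_of_le_one_right (norm_nonneg _) (chi_le_one η a x)
    · refine hu.2.1.of_le_mul (c := η) (hu.1.mul (chi_deriv_cont η a)).aestronglyMeasurable
        (ae_of_all _ fun x => ?_)
      rw [norm_mul, mul_comm]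
      refine mul_le_mul_of_nonneg_right ?_ (norm_nonneg _)
      exact (chi_deriv_bound hη a x).trans (mul_le_of_le_one_right hη (chi_le_one η a x))
  · have := (hac x).integral_deriv_mul_eq_sub (chi_ac η a x)
    rw [this]; ring

lemma V_bound {V : ℝ → ℝ} (hV : MemLp V ⊤ (volume : Measure ℝ)) :
    ∃ C, ∀ᵐ x, ‖V x‖ ≤ C := ⟨_, ae_le_lpNorm_exponent_top hV⟩

lemma V_ge {V : ℝ → ℝ} (hV : MemLp V ⊤ (volume : Measure ℝ)) :
    ∀ᵐ x, essInf V volume ≤ V x := by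
  obtain ⟨C, hC⟩ := V_bound hV
  refine ae_essInf_le ⟨-C, ?_⟩
  rw [eventually_map]
  filter_upwards [hC] with x hx using (abs_le.1 hx).1

lemma IV_integrable {V : ℝ → ℝ} (hV : MemLp V ⊤ (volume : Measure ℝ)) {u : ℝ → ℝ} (hu : IsH1 u) :
    Integrable (fun x => (deriv u x) ^ 2 + V x * (u x) ^ 2) := by
  obtain ⟨C, hC⟩ := V_bound hV
  exact hu.ae_deriv.2.1.integrable_sq.add (hu.2.1.integrable_sq.bdd_mul hV.1 hC)

lemma IV_nonneg {V : ℝ → ℝ} (hV : MemLp V ⊤ (volume : Measure ℝ))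
    (hpos : 0 < essInf V (volume : Measure ℝ)) (u : ℝ → ℝ) : 0 ≤ IV V u := by
  refine integral_nonneg_of_ae ?_
  filter_upwards [V_ge hV] with x hx
  have : 0 ≤ V x := hpos.le.trans hx
  simp only [Pi.zero_apply]
  positivity

lemma sq_int_le {V : ℝ → ℝ} (hV : MemLp V ⊤ (volume : Measure ℝ))
    (hpos : 0 < essInf V (volume : Measure ℝ)) {u : ℝ → ℝ} (hu : IsH1 u) :
    ∫ x, (u x) ^ 2 ≤ IV V u / essInf V volume := by
  rw [le_div_iff₀ hpos, ← integral_mul_const]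
  refine integral_mono_ae (hu.2.1.integrable_sq.mul_const _) (IV_integrable hV hu) ?_
  filter_upwards [V_ge hV] with x hx
  have := mul_le_mul_of_nonneg_right hx (sq_nonneg (u x))
  nlinarith [sq_nonneg (deriv u x)]

lemma IV_cut {V : ℝ → ℝ} (hV : MemLp V ⊤ (volume : Measure ℝ))
    (hpos : 0 < essInf V (volume : Measure ℝ)) {u : ℝ → ℝ} (hu : IsH1 u) {η : ℝ} (hη : 0 < η)
    (a : ℝ) :
    IV V (fun x => u x * chi η a x) ≤ (1 + η) * (1 + η / essInf V volume) * IV V u := by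
  unfold IV
  rw [← integral_const_mul]
  refine integral_mono_ae (IV_integrable hV (hu.mul_chi hη.le a))
    ((IV_integrable hV hu).const_mul _) ?_
  filter_upwards [V_ge hV, hu.ae_deriv.1] with x hx hd
  have hder : deriv (fun x => u x * chi η a x) x = deriv u x * chi η a x + u x * deriv (chi η a) x :=
    (hd.hasDerivAt.mul (chi_hasDeriv η a x).differentiableAt.hasDerivAt).deriv
  simp only [hder]
  set c := essInf V volume
  set k := chi η a x
  set k' := deriv (chi η a) x
  have hk0 : 0 ≤ k := (chi_pos η a x).le
  have hk1 : k ^ 2 ≤ 1 := by have : k ≤ 1 := chi_le_one η a x; nlinarith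
  have hk2 : k' ^ 2 ≤ η ^ 2 := by
    rw [← sq_abs k']
    have h1 : |k'| ≤ η * k := chi_deriv_bound hη.le a x
    have : k ≤ 1 := chi_le_one η a x
    have : |k'| ≤ η := h1.trans (mul_le_of_le_one_right hη.le this)
    exact pow_le_pow_left₀ (abs_nonneg _) this 2
  set d := deriv u x
  set w := u x
  have e1 : (d * k + w * k') ^ 2 ≤ (1 + η) * (d * k) ^ 2 + (1 + 1 / η) * (w * k') ^ 2 := by
    have : (1 + η) * (d * k) ^ 2 + (1 + 1 / η) * (w * k') ^ 2 - (d * k + w * k') ^ 2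
        = (η * (d * k) - w * k') ^ 2 / η := by field_simp; ring
    have : 0 ≤ (η * (d * k) - w * k') ^ 2 / η := by positivity
    linarith
  have e2 : (d * k) ^ 2 ≤ d ^ 2 := by
    rw [mul_pow]; exact mul_le_of_le_one_right (sq_nonneg _) hk1
  have e3 : (1 + 1 / η) * (w * k') ^ 2 ≤ (1 + η) * (η * w ^ 2) := by
    have : (1 + 1 / η) * (w * k') ^ 2 ≤ (1 + 1 / η) * (w ^ 2 * η ^ 2) := by
      rw [mul_pow]; gcongr
    refine this.trans (le_of_eq ?_)
    field_simp
    ring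
  have e4 : V x * (w * k) ^ 2 ≤ V x * w ^ 2 := by
    have : 0 ≤ V x := hpos.le.trans hx
    rw [mul_pow]
    exact mul_le_mul_of_nonneg_left (mul_le_of_le_one_right (sq_nonneg _) hk1) this
  have hP : 0 ≤ V x * w ^ 2 := mul_nonneg (hpos.le.trans hx) (sq_nonneg _)
  have e5 : η * w ^ 2 ≤ η / c * (V x * w ^ 2) := by
    have : η * w ^ 2 = η / c * (c * w ^ 2) := by field_simp
    rw [this]
    gcongr
  have hc : 0 ≤ η / c := by positivity
  have e6 : (1 + η) * (d * k) ^ 2 ≤ (1 + η) * d ^ 2 := by gcongr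
  have e7 : 0 ≤ η / c * d ^ 2 := by positivity
  calc _ ≤ (1 + η) * d ^ 2 + (1 + η) * (η / c * (V x * w ^ 2)) + (1 + η) * (V x * w ^ 2) := by
        nlinarith
    _ ≤ _ := by nlinarith

/-- the error term -/
noncomputable def err (q δ η : ℝ) (μ₀ : ℝ → ℝ) (μ₁ : SignedMeasure ℝ) (a : ℝ) : ℝ :=
  (∫ x, (|μ₀ x| / δ) ^ q * (δ * (chi η a x) ^ 2)) +
    ∫ x, (chi η a x) ^ 2 ∂μ₁.toJordanDecomposition.posPart

lemma rpow_int {p : ENNReal} (hp1 : 1 ≤ p) (hp2 : p ≠ ⊤)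
    {μ₀ : ℝ → ℝ} (hμ₀ : MemLp μ₀ p (volume : Measure ℝ)) {δ : ℝ} (hδ : 0 < δ) :
    Integrable (fun x => (|μ₀ x| / δ) ^ p.toReal) := by
  have h := (hμ₀.integrable_norm_rpow (by positivity) hp2).mul_const ((δ ^ p.toReal)⁻¹)
  refine h.congr (ae_of_all _ fun x => ?_)
  simp only [Real.norm_eq_abs]
  rw [Real.div_rpow (abs_nonneg _) hδ.le, div_eq_mul_inv]

lemma chi_tendsto {l : Filter ℝ} (hl : l ≤ cocompact ℝ) {η : ℝ} (hη : 0 < η) (x : ℝ) :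
    Tendsto (fun a => chi η a x) l (𝓝 0) := by
  refine Tendsto.mono_left ?_ hl
  unfold chi
  refine Tendsto.inv_tendsto_atTop ?_
  refine tendsto_atTop_mono (f := fun a => η ^ 2 * (‖a - x‖ ^ 2)) (fun a => ?_) ?_
  · rw [Real.norm_eq_abs, sq_abs]; nlinarith
  · refine Tendsto.const_mul_atTop (by positivity) ?_
    refine (tendsto_pow_atTop two_ne_zero).comp ?_
    have := (Homeomorph.subRight x).isClosedEmbedding.tendsto_cocompact
    exact (tendsto_norm_cocompact_atTop (E := ℝ)).comp this

lemma err_tendsto {l : Filter ℝ} [l.IsCountablyGenerated] (hl : l ≤ cocompact ℝ)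
    {p : ENNReal} (hp1 : 1 ≤ p) (hp2 : p ≠ ⊤)
    {μ₀ : ℝ → ℝ} (hμ₀ : MemLp μ₀ p (volume : Measure ℝ)) (μ₁ : SignedMeasure ℝ)
    {δ η : ℝ} (hδ : 0 < δ) (hη : 0 < η) :
    Tendsto (err p.toReal δ η μ₀ μ₁) l (𝓝 0) := by
  have hi := rpow_int hp1 hp2 hμ₀ hδ
  have hsq : ∀ a x, (chi η a x) ^ 2 ≤ 1 := fun a x => by
    have := chi_pos η a x
    have := chi_le_one η a x
    nlinarith
  have h1 : Tendsto (fun a => ∫ x, (|μ₀ x| / δ) ^ p.toReal * (δ * (chi η a x) ^ 2)) l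
      (𝓝 (∫ _ : ℝ, (0 : ℝ))) := by
    refine tendsto_integral_filter_of_dominated_convergence
      (fun x => (|μ₀ x| / δ) ^ p.toReal * δ) ?_ ?_ (hi.mul_const δ) ?_
    · refine Eventually.of_forall fun a => hi.1.mul ?_
      exact (((chi_cont η a).pow 2).const_mul δ).aestronglyMeasurable
    · refine Eventually.of_forall fun a => ae_of_all _ fun x => ?_
      rw [Real.norm_of_nonneg (by positivity)]
      gcongr
      exact mul_le_of_le_one_right hδ.le (hsq a x)
    · refine ae_of_all _ fun x => ?_
      have := (((chi_tendsto hl hη x).pow 2).const_mul δ).const_mul ((|μ₀ x| / δ) ^ p.toReal)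
      simpa using this
  have h2 : Tendsto (fun a => ∫ x, (chi η a x) ^ 2 ∂μ₁.toJordanDecomposition.posPart) l
      (𝓝 (∫ _ : ℝ, (0 : ℝ) ∂μ₁.toJordanDecomposition.posPart)) := by
    refine tendsto_integral_filter_of_dominated_convergence
      (fun x => 1) ?_ ?_ (integrable_const _) ?_
    · exact Eventually.of_forall fun a => ((chi_cont η a).pow 2).aestronglyMeasurable
    · refine Eventually.of_forall fun a => ae_of_all _ fun x => ?_
      rw [Real.norm_of_nonneg (by positivity)]
      exact hsq a x
    · refine ae_of_all _ fun x => ?_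
      simpa using (chi_tendsto hl hη x).pow 2
  have := h1.add h2
  simp only [integral_zero, add_zero] at this
  exact this

lemma pert_le {p : ENNReal} (hp1 : 1 ≤ p) (hp2 : p ≠ ⊤)
    {μ₀ : ℝ → ℝ} (hμ₀ : MemLp μ₀ p (volume : Measure ℝ)) (μ₁ : SignedMeasure ℝ)
    {δ η : ℝ} (hδ : 0 < δ) {u : ℝ → ℝ} (hu : IsH1 u) (hu1 : ∀ x, |u x| ≤ 1) (a : ℝ) :
    (∫ x : ℝ, μ₀ x * (u x * chi η a x) ^ 2) + sMeasInt μ₁ (fun x => (u x * chi η a x) ^ 2)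
      ≤ δ * (∫ x, (u x) ^ 2) + err p.toReal δ η μ₀ μ₁ a := by
  have hi := rpow_int hp1 hp2 hμ₀ hδ
  have hsq : ∀ a x, (chi η a x) ^ 2 ≤ 1 := fun a x => by
    have := chi_pos η a x
    have := chi_le_one η a x
    nlinarith
  have husq : ∀ x, (u x) ^ 2 ≤ 1 := fun x => (sq_le_one_iff_abs_le_one _).2 (hu1 x)
  have hq : 1 ≤ p.toReal := by
    have := ENNReal.toReal_mono hp2 hp1
    simpa using this
  have hi2 : Integrable (fun x => (|μ₀ x| / δ) ^ p.toReal * (δ * (chi η a x) ^ 2)) := by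
    refine (hi.mul_const δ).mono' (hi.1.mul
      (((chi_cont η a).pow 2).const_mul δ).aestronglyMeasurable) (ae_of_all _ fun x => ?_)
    rw [Real.norm_of_nonneg (by positivity)]
    gcongr
    exact mul_le_of_le_one_right hδ.le (hsq a x)
  have A : (∫ x : ℝ, μ₀ x * (u x * chi η a x) ^ 2) ≤
      δ * (∫ x, (u x) ^ 2) + ∫ x, (|μ₀ x| / δ) ^ p.toReal * (δ * (chi η a x) ^ 2) := by
    rw [← integral_const_mul, ← integral_add (hu.2.1.integrable_sq.const_mul δ) hi2]
    refine (le_abs_self _).trans ((abs_integral_le_integral_abs).trans ?_)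
    refine integral_mono_of_nonneg (ae_of_all _ fun x => abs_nonneg _)
      ((hu.2.1.integrable_sq.const_mul δ).add hi2) (ae_of_all _ fun x => ?_)
    simp only
    rw [abs_mul, abs_of_nonneg (sq_nonneg (u x * chi η a x)), mul_pow]
    by_cases h : |μ₀ x| ≤ δ
    · have h1 : |μ₀ x| * (u x ^ 2 * chi η a x ^ 2) ≤ δ * u x ^ 2 := by
        gcongr
        exact mul_le_of_le_one_right (sq_nonneg _) (hsq a x)
      have : 0 ≤ (|μ₀ x| / δ) ^ p.toReal * (δ * (chi η a x) ^ 2) := by positivity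
      linarith
    · have h0 : 1 ≤ |μ₀ x| / δ := (one_le_div hδ).2 (not_le.1 h).le
      have h1 : |μ₀ x| / δ ≤ (|μ₀ x| / δ) ^ p.toReal := Real.self_le_rpow_of_one_le h0 hq
      have h2 : |μ₀ x| * (u x ^ 2 * chi η a x ^ 2) ≤ |μ₀ x| * chi η a x ^ 2 := by
        gcongr
        exact mul_le_of_le_one_left (sq_nonneg _) (husq x)
      have h3 : |μ₀ x| * chi η a x ^ 2 = |μ₀ x| / δ * (δ * chi η a x ^ 2) := by field_simp
      have h4 : |μ₀ x| / δ * (δ * chi η a x ^ 2) ≤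
        (|μ₀ x| / δ) ^ p.toReal * (δ * (chi η a x) ^ 2) := by gcongr
      have : 0 ≤ δ * u x ^ 2 := by positivity
      linarith
  have B : sMeasInt μ₁ (fun x => (u x * chi η a x) ^ 2) ≤
      ∫ x, (chi η a x) ^ 2 ∂μ₁.toJordanDecomposition.posPart := by
    unfold sMeasInt
    have h1 : 0 ≤ ∫ x, (u x * chi η a x) ^ 2 ∂μ₁.toJordanDecomposition.negPart :=
      integral_nonneg fun x => sq_nonneg _
    have h2 : ∫ x, (u x * chi η a x) ^ 2 ∂μ₁.toJordanDecomposition.posPart ≤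
        ∫ x, (chi η a x) ^ 2 ∂μ₁.toJordanDecomposition.posPart := by
      refine integral_mono_of_nonneg (ae_of_all _ fun x => sq_nonneg _) ?_
        (ae_of_all _ fun x => ?_)
      · refine (integrable_const (1:ℝ)).mono' ((chi_cont η a).pow 2).aestronglyMeasurable
          (ae_of_all _ fun x => ?_)
        rw [Real.norm_of_nonneg (by positivity)]
        exact hsq a x
      · simp only [mul_pow]
        exact mul_le_of_le_one_left (sq_nonneg _) (husq x)
    linarith
  unfold err
  linarith

theorem mV_perturbation_invariance (V : ℝ → ℝ) (hV : MemLp V ⊤ (volume : Measure ℝ))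
    (hpos : 0 < essInf V (volume : Measure ℝ))
    (hlim : Tendsto (fun a : ℝ => FV V a) atTop (𝓝 (mV V)) ∨
      Tendsto (fun a : ℝ => FV V a) atBot (𝓝 (mV V)))
    (p : ENNReal) (hp1 : 1 ≤ p) (hp2 : p ≠ ⊤)
    (μ₀ : ℝ → ℝ) (hμ₀ : MemLp μ₀ p (volume : Measure ℝ))
    (μ₁ : SignedMeasure ℝ)
    (hnn : ∀ u : ℝ → ℝ, IsH1 u →
      0 ≤ (∫ x : ℝ, μ₀ x * (u x) ^ 2) + sMeasInt μ₁ (fun x => (u x) ^ 2)) :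
    mVmu V μ₀ μ₁ = mV V ∧
      ∀ u : ℝ → ℝ, IsH1 u → u ≠ 0 →
        IVmu V μ₀ μ₁ u / (supNorm u) ^ 2 = mVmu V μ₀ μ₁ →
        IV V u / (supNorm u) ^ 2 = mV V := by
  have hIV : ∀ u, IsH1 u → IV V u ≤ IVmu V μ₀ μ₁ u := fun u hu => by
    have := hnn u hu
    unfold IVmu; linarith
  have hmV : ∀ u, IsH1 u → u ≠ 0 → mV V ≤ IV V u / (supNorm u) ^ 2 := fun u hu h0 => by
    refine csInf_le ⟨0, ?_⟩ ⟨u, hu, h0, rfl⟩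
    rintro _ ⟨v, -, -, rfl⟩
    exact div_nonneg (IV_nonneg hV hpos v) (sq_nonneg _)
  have hdiv : ∀ u, IsH1 u → IV V u / (supNorm u) ^ 2 ≤ IVmu V μ₀ μ₁ u / (supNorm u) ^ 2 :=
    fun u hu => div_le_div_of_nonneg_right (hIV u hu) (sq_nonneg _)
  have hmVmu : ∀ u, IsH1 u → u ≠ 0 → mVmu V μ₀ μ₁ ≤ IVmu V μ₀ μ₁ u / (supNorm u) ^ 2 :=
    fun u hu h0 => by
    refine csInf_le ⟨0, ?_⟩ ⟨u, hu, h0, rfl⟩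
    rintro _ ⟨v, hv, -, rfl⟩
    exact (div_nonneg (IV_nonneg hV hpos v) (sq_nonneg _)).trans (hdiv v hv)
  have hge : mV V ≤ mVmu V μ₀ μ₁ := by
    refine le_csInf ⟨_, chi 1 0, (chi_inKa 0).1, (chi_inKa 0).ne_zero, rfl⟩ ?_
    rintro _ ⟨u, hu, h0, rfl⟩
    exact (hmV u hu h0).trans (hdiv u hu)
  have key : ∀ η : ℝ, 0 < η → ∀ a : ℝ, mVmu V μ₀ μ₁ ≤
      (1 + η) * (1 + η / essInf V volume) * (FV V a + η) +
        η * ((FV V a + η) / essInf V volume) + err p.toReal η η μ₀ μ₁ a := by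
    intro η hη a
    obtain ⟨_, ⟨u, hu, rfl⟩, hlt⟩ := exists_lt_of_csInf_lt
      (s := {r : ℝ | ∃ u : ℝ → ℝ, InKa a u ∧ r = IV V u})
      ⟨_, chi 1 a, chi_inKa a, rfl⟩ (lt_add_of_pos_right (FV V a) hη)
    have hu1 := le_of_supNorm hu.2.2
    have hv : IsH1 (fun x => u x * chi η a x) := hu.1.mul_chi hη.le a
    have hva : (fun x => u x * chi η a x) a = 1 := by simp [hu.2.1, chi_self]
    have hvs : supNorm (fun x => u x * chi η a x) = 1 := by
      refine supNorm_eq_one hva fun x => ?_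
      rw [abs_mul, abs_of_pos (chi_pos η a x)]
      exact mul_le_one₀ (hu1 x) (chi_pos η a x).le (chi_le_one η a x)
    have h1 := hmVmu _ hv (InKa.ne_zero (a := a) ⟨hv, hva, hvs⟩)
    rw [hvs, one_pow, div_one] at h1
    have h2 := pert_le hp1 hp2 hμ₀ μ₁ (δ := η) (η := η) hη hu.1 hu1 a
    have h3 := IV_cut hV hpos hu.1 hη a
    have h4 := sq_int_le hV hpos hu.1
    have h5 : (1 + η) * (1 + η / essInf V volume) * IV V u ≤
      (1 + η) * (1 + η / essInf V volume) * (FV V a + η) := by gcongr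
    have h6 : η * (∫ x, (u x) ^ 2) ≤ η * ((FV V a + η) / essInf V volume) := by
      refine mul_le_mul_of_nonneg_left (h4.trans ?_) hη.le
      gcongr
    unfold IVmu at h1
    linarith
  have main : ∀ l : Filter ℝ, l.NeBot → l.IsCountablyGenerated → l ≤ cocompact ℝ →
      Tendsto (fun a : ℝ => FV V a) l (𝓝 (mV V)) → mVmu V μ₀ μ₁ ≤ mV V := by
    intro l _ _ hl ht
    have k2 : ∀ η : ℝ, 0 < η → mVmu V μ₀ μ₁ ≤
      (1 + η) * (1 + η / essInf V volume) * (mV V + η) +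
        η * ((mV V + η) / essInf V volume) := by
      intro η hη
      have hT := ((((ht.add_const η).const_mul ((1 + η) * (1 + η / essInf V volume))).add
        (((ht.add_const η).div_const (essInf V volume)).const_mul η)).add
        (err_tendsto hl hp1 hp2 hμ₀ μ₁ hη hη))
      rw [add_zero] at hT
      exact ge_of_tendsto hT (Eventually.of_forall (key η hη))
    have hc : Tendsto (fun η : ℝ => (1 + η) * (1 + η / essInf V volume) * (mV V + η) +
        η * ((mV V + η) / essInf V volume)) (𝓝[>] 0) (𝓝 (mV V)) := by
      have : Continuous (fun η : ℝ => (1 + η) * (1 + η / essInf V volume) * (mV V + η) +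
        η * ((mV V + η) / essInf V volume)) := by fun_prop
      have := this.tendsto 0
      simp only [add_zero, zero_div, one_mul, zero_mul] at this
      exact this.mono_left nhdsWithin_le_nhds
    exact ge_of_tendsto hc (eventually_mem_nhdsWithin.mono fun η hη => k2 η hη)
  have heq : mVmu V μ₀ μ₁ = mV V := by
    refine le_antisymm ?_ hge
    rcases hlim with h | h
    · exact main atTop inferInstance inferInstance atTop_le_cocompact h
    · exact main atBot inferInstance inferInstance atBot_le_cocompact h
  refine ⟨heq, fun u hu h0 he => le_antisymm ?_ (hmV u hu h0)⟩
  rw [← heq, ← he]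
  exact hdiv u hu
end

section
/- Let α > 0 and β ∈ ℝ. Then m(α + β δ₀) = 2√α − β₋, where β₋ = max(−β, 0). In particular, if 2√α + β > 0, then the Sobolev-type inequality ‖u‖_∞ ≤ C ( ∫_ℝ (|u′(x)|² + α|u(x)|²) dx + β|u(0)|² )^{1/2} holds for all u ∈ H¹(ℝ), and its best (smallest possible) constant is C = (2√α − β₋)^{−1/2}. -/
open MeasureTheory Filter Real Topology

/-- `I(u; α + βδ₀) = ∫_ℝ (|u'|² + α|u|²) dx + β|u(0)|²`. -/
noncomputable def Iab (α β : ℝ) (u : ℝ → ℝ) : ℝ :=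
  (∫ x : ℝ, ((deriv u x) ^ 2 + α * (u x) ^ 2)) + β * (u 0) ^ 2

/-- `m(α + βδ₀) = inf { I(u;α+βδ₀)/‖u‖_∞² ; u ∈ H¹(ℝ), u ≢ 0 }`. -/
noncomputable def mab (α β : ℝ) : ℝ :=
  sInf {r : ℝ | ∃ u : ℝ → ℝ, IsH1 u ∧ u ≠ 0 ∧ r = Iab α β u / (supNorm u) ^ 2}

theorem h1_props (u : ℝ → ℝ) (h : IsH1 u) :
    Integrable (fun x => (u x) ^ 2) ∧ Integrable (fun x => (deriv u x) ^ 2) ∧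
      ∀ a b, AbsolutelyContinuousOnInterval u a b := by
  obtain ⟨hc, hu, v, hv, hi⟩ := h
  have hvl : LocallyIntegrable v volume := hv.locallyIntegrable (by norm_num)
  have hvi (a b : ℝ) : IntervalIntegrable v volume a b :=
    (intervalIntegrable_iff.mpr <|
      (hvl.integrableOn_isCompact isCompact_uIcc).mono_set Set.uIoc_subset_uIcc)
  have hd : ∀ᵐ x, deriv u x = v x := by
    filter_upwards [_root_.LocallyIntegrable.ae_hasDerivAt_integral hvl] with x hx
    have h1 := (hx 0).const_add (u 0)
    have h2 : u = fun x => u 0 + ∫ t in (0:ℝ)..x, v t := funext hi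
    rw [← h2] at h1
    exact h1.deriv
  refine ⟨hu.integrable_sq, ?_, ?_⟩
  · refine hv.integrable_sq.congr ?_
    filter_upwards [hd] with x hx
    rw [hx]
  · intro a b
    have h0 := (hvi a b).absolutelyContinuousOnInterval_intervalIntegral (c := a) (by simp)
    have h2 : u = fun x => (∫ t in a..x, v t) + u a := by
      funext x
      have e1 := hi x
      have e2 := hi a
      have e3 := intervalIntegral.integral_add_adjacent_intervals (hvi 0 a) (hvi a x)
      linarith
    have hconst : AbsolutelyContinuousOnInterval (fun _ : ℝ => u a) a b :=
      (LipschitzWith.const (u a)).lipschitzOnWith.absolutelyContinuousOnInterval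
    rw [h2]
    exact h0.add hconst

theorem exists_small (f : ℝ → ℝ) (hf : Integrable f) (S : Set ℝ) (hS : MeasurableSet S)
    (hv : volume S = ⊤) (ε : ℝ) (hε : 0 < ε) : ∃ x ∈ S, f x < ε := by
  by_contra! hcon
  have h1 : IntegrableOn (fun _ : ℝ => ε) S := by
    refine Integrable.mono' hf.integrableOn (by fun_prop) ?_
    filter_upwards [ae_restrict_mem hS] with x hx
    rw [Real.norm_eq_abs, abs_of_pos hε]
    exact hcon x hx
  rw [integrableOn_const_iff] at h1
  rcases h1 with h1 | h1
  · exact hε.ne' (by simpa using h1)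
  · simp [hv] at h1

theorem lower0 (α : ℝ) (hα : 0 < α) (u : ℝ → ℝ) (h : IsH1 u) (y : ℝ) :
    2 * √α * (u y) ^ 2 ≤ ∫ x : ℝ, ((deriv u x) ^ 2 + α * (u x) ^ 2) := by
  obtain ⟨hu2, hd2, hac⟩ := h1_props u h
  have hs : 0 < √α := Real.sqrt_pos.mpr hα
  have hss : √α * √α = α := Real.mul_self_sqrt hα.le
  have hF : Integrable (fun x => (deriv u x) ^ 2 + α * (u x) ^ 2) := hd2.add (hu2.const_mul α)
  have hFi (a b : ℝ) : IntervalIntegrable (fun x => (deriv u x) ^ 2 + α * (u x) ^ 2) volume a b :=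
    hF.intervalIntegrable
  have hPi (a b : ℝ) : IntervalIntegrable (fun x => deriv u x * u x + u x * deriv u x)
      volume a b :=
    ((hac a b).intervalIntegrable_deriv.mul_continuousOn (hac a b).continuousOn).add
      ((hac a b).intervalIntegrable_deriv.continuousOn_mul (hac a b).continuousOn)
  have hP (a b : ℝ) := (hac a b).integral_deriv_mul_eq_sub (hac a b)
  have hL (a b : ℝ) (hab : a ≤ b) : √α * (u b * u b - u a * u a) ≤
      ∫ x in a..b, ((deriv u x) ^ 2 + α * (u x) ^ 2) := by
    rw [← hP a b, ← intervalIntegral.integral_const_mul]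
    refine intervalIntegral.integral_mono_on hab ((hPi a b).const_mul _) (hFi a b) ?_
    intro x _
    nlinarith [sq_nonneg (deriv u x - √α * u x)]
  have hR (a b : ℝ) (hab : a ≤ b) : (-√α) * (u b * u b - u a * u a) ≤
      ∫ x in a..b, ((deriv u x) ^ 2 + α * (u x) ^ 2) := by
    rw [← hP a b, ← intervalIntegral.integral_const_mul]
    refine intervalIntegral.integral_mono_on hab ((hPi a b).const_mul _) (hFi a b) ?_
    intro x _
    nlinarith [sq_nonneg (deriv u x + √α * u x)]
  refine le_of_forall_pos_le_add fun ε hε => ?_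
  have hδ : 0 < ε / (2 * √α) := by positivity
  obtain ⟨a, ha, ha'⟩ := exists_small _ hu2 (Set.Iio y) measurableSet_Iio (by simp) _ hδ
  obtain ⟨b, hb, hb'⟩ := exists_small _ hu2 (Set.Ioi y) measurableSet_Ioi (by simp) _ hδ
  have e1 := hL a y (le_of_lt ha)
  have e2 := hR y b (le_of_lt hb)
  have e3 := intervalIntegral.integral_add_adjacent_intervals (hFi a y) (hFi y b)
  have e4 : ∫ x in a..b, ((deriv u x) ^ 2 + α * (u x) ^ 2) ≤
      ∫ x : ℝ, ((deriv u x) ^ 2 + α * (u x) ^ 2) := by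
    rw [intervalIntegral.integral_of_le (le_trans (le_of_lt ha) (le_of_lt hb))]
    refine setIntegral_le_integral hF (Eventually.of_forall fun x => ?_)
    show 0 ≤ (deriv u x) ^ 2 + α * (u x) ^ 2
    positivity
  rw [lt_div_iff₀ (by positivity)] at ha' hb'
  nlinarith

theorem sup_props (α : ℝ) (hα : 0 < α) (u : ℝ → ℝ) (h : IsH1 u) :
    BddAbove (Set.range fun x => |u x|) ∧
    2 * √α * (supNorm u) ^ 2 ≤ ∫ x : ℝ, ((deriv u x) ^ 2 + α * (u x) ^ 2) := by
  have hs : 0 < √α := Real.sqrt_pos.mpr hα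
  have hb : ∀ y, |u y| ≤ √((∫ x : ℝ, ((deriv u x) ^ 2 + α * (u x) ^ 2)) / (2 * √α)) := by
    intro y
    apply Real.abs_le_sqrt
    rw [le_div_iff₀ (by positivity)]
    linarith [lower0 α hα u h y]
  have hI : 0 ≤ ∫ x : ℝ, ((deriv u x) ^ 2 + α * (u x) ^ 2) :=
    integral_nonneg fun x => by show 0 ≤ (deriv u x) ^ 2 + α * (u x) ^ 2; positivity
  refine ⟨⟨_, by rintro _ ⟨y, rfl⟩; exact hb y⟩, ?_⟩
  have h1 : supNorm u ≤ √((∫ x : ℝ, ((deriv u x) ^ 2 + α * (u x) ^ 2)) / (2 * √α)) :=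
    ciSup_le hb
  have h0 : 0 ≤ supNorm u := Real.iSup_nonneg fun x => abs_nonneg _
  have h2 := (Real.le_sqrt h0 (by positivity)).mp h1
  rw [le_div_iff₀ (by positivity)] at h2
  linarith

theorem lower1 (α β : ℝ) (hα : 0 < α) (u : ℝ → ℝ) (h : IsH1 u) :
    (2 * √α - max (-β) 0) * (supNorm u) ^ 2 ≤ Iab α β u := by
  obtain ⟨hb, hl⟩ := sup_props α hα u h
  have h0 : |u 0| ≤ supNorm u := le_ciSup hb 0
  have h1 : (u 0) ^ 2 ≤ (supNorm u) ^ 2 := by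
    rw [← sq_abs]; exact pow_le_pow_left₀ (abs_nonneg _) h0 2
  unfold Iab
  have h2 : -(max (-β) 0) ≤ β := by linarith [le_max_left (-β) 0]
  have h3 : 0 ≤ max (-β) 0 := le_max_right _ _
  nlinarith [sq_nonneg (u 0)]

/-- The test functions. -/
noncomputable def tf (s h : ℝ) : ℝ → ℝ := fun x => Real.exp (-s * |x - h|)

theorem int_exp (c : ℝ) (hc : 0 < c) :
    Integrable (fun x : ℝ => Real.exp (-c * |x|)) ∧ ∫ x : ℝ, Real.exp (-c * |x|) = 2 / c := by
  constructor
  · rw [← integrableOn_univ, ← Set.Iic_union_Ioi (a := (0:ℝ))]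
    refine IntegrableOn.union ?_ ?_
    · refine (integrableOn_exp_mul_Iic hc 0).congr_fun ?_ measurableSet_Iic
      intro x hx
      have hx : x ≤ 0 := hx
      simp [abs_of_nonpos hx]
    · refine (integrableOn_exp_mul_Ioi (neg_lt_zero.mpr hc) 0).congr_fun ?_ measurableSet_Ioi
      intro x hx
      have hx : 0 < x := hx
      simp [abs_of_pos hx]
  · rw [integral_comp_abs (f := fun x => Real.exp (-c * x)),
      integral_exp_mul_Ioi (neg_lt_zero.mpr hc) 0]
    simp
    field_simp

theorem tf_sq (s h x : ℝ) : (tf s h x) ^ 2 = Real.exp (-(2 * s) * |x - h|) := by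
  unfold tf
  rw [← Real.exp_nat_mul]
  congr 1
  push_cast
  ring

theorem tf_int (s h : ℝ) (hs : 0 < s) :
    Integrable (fun x => (tf s h x) ^ 2) ∧ ∫ x, (tf s h x) ^ 2 = 1 / s := by
  simp_rw [tf_sq]
  obtain ⟨h1, h2⟩ := int_exp (2 * s) (by positivity)
  refine ⟨h1.comp_sub_right h, ?_⟩
  rw [integral_sub_right_eq_self (fun x => Real.exp (-(2 * s) * |x|)) h, h2]
  field_simp

theorem tf_deriv (s h x : ℝ) (hx : x ≠ h) :
    HasDerivAt (tf s h) (-s * (SignType.sign (x - h) : ℝ) * tf s h x) x := by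
  have h1 : HasDerivAt (fun x => |x - h|) (SignType.sign (x - h) : ℝ) x := by
    have h3 := (hasDerivAt_abs (sub_ne_zero.mpr hx)).comp x ((hasDerivAt_id x).sub_const h)
    rw [mul_one] at h3
    exact h3
  have h2 := (h1.const_mul (-s)).exp
  unfold tf
  convert h2 using 1
  ring

theorem tf_cont (s h : ℝ) : Continuous (tf s h) := by unfold tf; fun_prop

theorem sign_meas : Measurable (fun x : ℝ => (SignType.sign x : ℝ)) := by
  have : (fun x : ℝ => (SignType.sign x : ℝ)) =
      fun x => if 0 < x then 1 else if x < 0 then -1 else 0 := by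
    funext x
    rw [sign_apply]
    split_ifs <;> simp
  rw [this]
  exact Measurable.ite measurableSet_Ioi measurable_const
    (Measurable.ite measurableSet_Iio measurable_const measurable_const)

theorem tf_h1 (s h : ℝ) (hs : 0 < s) : IsH1 (tf s h) := by
  have hL : MemLp (tf s h) 2 volume :=
    (memLp_two_iff_integrable_sq (tf_cont s h).aestronglyMeasurable).mpr (tf_int s h hs).1
  have hm : Measurable (fun x : ℝ => -s * (SignType.sign (x - h) : ℝ) * tf s h x) := by
    have := sign_meas.comp (measurable_id.sub_const h)
    exact (this.const_mul (-s)).mul (tf_cont s h).measurable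
  have hL' : MemLp (fun x : ℝ => -s * (SignType.sign (x - h) : ℝ) * tf s h x) 2 volume := by
    refine MemLp.of_le_mul (c := s) hL hm.aestronglyMeasurable (Eventually.of_forall fun x => ?_)
    have h1 : |(SignType.sign (x - h) : ℝ)| ≤ 1 := by
      rcases lt_trichotomy (x - h) 0 with hx | hx | hx <;> simp [hx]
    rw [norm_mul, norm_mul, Real.norm_eq_abs, Real.norm_eq_abs, abs_neg, abs_of_pos hs]
    have := norm_nonneg (tf s h x)
    refine mul_le_mul_of_nonneg_right ?_ this
    nlinarith
  refine ⟨tf_cont s h, hL, _, hL', fun x => ?_⟩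
  have hint : IntervalIntegrable (fun x : ℝ => -s * (SignType.sign (x - h) : ℝ) * tf s h x)
      volume 0 x :=
    (intervalIntegrable_iff.mpr <|
      ((hL'.locallyIntegrable (by norm_num)).integrableOn_isCompact isCompact_uIcc).mono_set
        Set.uIoc_subset_uIcc)
  rw [integral_eq_of_hasDerivAt_off_countable (tf s h) _ (s := {h}) (Set.countable_singleton h)
    (tf_cont s h).continuousOn (fun y hy => tf_deriv s h y (by simpa using hy.2)) hint]
  ring

theorem tf_sup (s h : ℝ) (hs : 0 < s) : supNorm (tf s h) = 1 := by
  have hle : ∀ x, |tf s h x| ≤ 1 := by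
    intro x
    unfold tf
    rw [abs_of_pos (Real.exp_pos _), Real.exp_le_one_iff]
    nlinarith [abs_nonneg (x - h)]
  apply le_antisymm
  · exact ciSup_le hle
  · have := le_ciSup (f := fun x => |tf s h x|) ⟨1, by rintro _ ⟨x, rfl⟩; exact hle x⟩ h
    have h1 : |tf s h h| = 1 := by simp [tf]
    exact h1 ▸ this

theorem tf_ne (s h : ℝ) : tf s h ≠ 0 := by
  intro h0
  have := congrFun h0 0
  exact (Real.exp_pos _).ne' this

theorem tf_I (α β h : ℝ) (hα : 0 < α) :
    Iab α β (tf (√α) h) = 2 * √α + β * (tf (√α) h 0) ^ 2 := by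
  have hs : 0 < √α := Real.sqrt_pos.mpr hα
  have hss : √α * √α = α := Real.mul_self_sqrt hα.le
  unfold Iab
  congr 1
  have : ∫ x : ℝ, ((deriv (tf (√α) h) x) ^ 2 + α * (tf (√α) h x) ^ 2) =
      ∫ x : ℝ, (2 * α) * (tf (√α) h x) ^ 2 := by
    apply integral_congr_ae
    have hne : ∀ᵐ x : ℝ, x ≠ h := by simp [ae_iff, measure_singleton]
    filter_upwards [hne] with x hx
    rw [(tf_deriv (√α) h x hx).deriv]
    have h1 : (SignType.sign (x - h) : ℝ) ^ 2 = 1 := by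
      rcases lt_trichotomy (x - h) 0 with hx' | hx' | hx'
      · simp [hx']
      · exact absurd (sub_eq_zero.mp hx') hx
      · simp [hx']
    rw [mul_pow, mul_pow, h1, neg_sq, Real.sq_sqrt hα.le]
    ring
  rw [this, integral_const_mul, (tf_int (√α) h hs).2]
  field_simp
  nlinarith

/-- Minimizing sequence. -/
theorem min_seq (α β : ℝ) (hα : 0 < α) : ∃ v : ℕ → ℝ → ℝ,
    (∀ n, IsH1 (v n) ∧ v n ≠ 0 ∧ supNorm (v n) = 1) ∧
    Tendsto (fun n => Iab α β (v n)) atTop (𝓝 (2 * √α - max (-β) 0)) := by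
  have hs : 0 < √α := Real.sqrt_pos.mpr hα
  rcases le_total 0 β with hβ | hβ
  · refine ⟨fun n => tf (√α) n, fun n => ⟨tf_h1 _ _ hs, tf_ne _ _, tf_sup _ _ hs⟩, ?_⟩
    rw [max_eq_right (by linarith)]
    simp_rw [tf_I α β _ hα, tf_sq]
    have h1 : Tendsto (fun n : ℕ => Real.exp (-(2 * √α) * |0 - (n:ℝ)|)) atTop (𝓝 0) := by
      apply Real.tendsto_exp_atBot.comp
      have : (fun n : ℕ => -(2 * √α) * |0 - (n:ℝ)|) = fun n : ℕ => -(2 * √α) * (n:ℝ) := by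
        funext n; simp
      rw [this]
      exact tendsto_natCast_atTop_atTop.const_mul_atTop_of_neg (by linarith)
    have h2 := (h1.const_mul β).const_add (2 * √α)
    simpa using h2
  · refine ⟨fun n => tf (√α) 0, fun n => ⟨tf_h1 _ _ hs, tf_ne _ _, tf_sup _ _ hs⟩, ?_⟩
    rw [max_eq_left (by linarith)]
    simp_rw [tf_I α β _ hα, tf_sq]
    simp

/-- **Kametaka et al.: delta-function potential.** For `α > 0` and `β ∈ ℝ`,
`m(α + βδ₀) = 2√α - β₋`, where `β₋ = max(-β,0)`.  In particular, if `2√α + β > 0`, the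
Sobolev type inequality `‖u‖_∞ ≤ C I(u;α+βδ₀)^{1/2}` holds on `H¹(ℝ)` and its best
(smallest) constant is `C = (2√α - β₋)^{-1/2}`. -/
theorem mab_delta (α β : ℝ) (hα : 0 < α) :
    mab α β = 2 * Real.sqrt α - max (-β) 0 ∧
      (0 < 2 * Real.sqrt α + β →
        (∀ u : ℝ → ℝ, IsH1 u →
          supNorm u ≤ (Real.sqrt (2 * Real.sqrt α - max (-β) 0))⁻¹ * Real.sqrt (Iab α β u)) ∧
        ∀ C : ℝ, (∀ u : ℝ → ℝ, IsH1 u → supNorm u ≤ C * Real.sqrt (Iab α β u)) →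
          (Real.sqrt (2 * Real.sqrt α - max (-β) 0))⁻¹ ≤ C) := by
  have hlb : ∀ r ∈ {r : ℝ | ∃ u : ℝ → ℝ, IsH1 u ∧ u ≠ 0 ∧ r = Iab α β u / (supNorm u) ^ 2},
      2 * Real.sqrt α - max (-β) 0 ≤ r := by
    rintro r ⟨u, hu, hne, rfl⟩
    have hpos : 0 < supNorm u := by
      obtain ⟨x, hx⟩ := Function.ne_iff.mp hne
      have h1 : |u x| ≤ supNorm u := le_ciSup (sup_props α hα u hu).1 x
      exact lt_of_lt_of_le (abs_pos.mpr hx) h1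
    rw [le_div_iff₀ (by positivity)]
    exact lower1 α β hα u hu
  obtain ⟨v, hv, hlim⟩ := min_seq α β hα
  refine ⟨?_, fun hpos => ?_⟩
  · apply le_antisymm
    · refine ge_of_tendsto' hlim fun n => ?_
      refine csInf_le ⟨_, hlb⟩ ⟨v n, (hv n).1, (hv n).2.1, ?_⟩
      rw [(hv n).2.2]; simp
    · exact le_csInf ⟨_, v 0, (hv 0).1, (hv 0).2.1, rfl⟩ hlb
  · have hc : 0 < 2 * Real.sqrt α - max (-β) 0 := by
      have : 0 < √α := Real.sqrt_pos.mpr hα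
      rcases max_cases (-β) 0 with h | h <;> linarith
    have hsc := Real.sqrt_pos.mpr hc
    refine ⟨fun u hu => ?_, fun C hC => ?_⟩
    · have h0 : 0 ≤ supNorm u := Real.iSup_nonneg fun x => abs_nonneg _
      rw [le_inv_mul_iff₀ hsc]
      apply Real.le_sqrt_of_sq_le
      rw [mul_pow, Real.sq_sqrt hc.le]
      exact lower1 α β hα u hu
    · rw [inv_le_iff_one_le_mul₀ hsc]
      refine ge_of_tendsto' ((Real.continuous_sqrt.tendsto _).comp hlim |>.const_mul C) fun n => ?_
      have := hC (v n) (hv n).1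
      rwa [(hv n).2.2] at this
end

section
/- Let V = V₀ + V₁ where V₀ ∈ L^∞(ℝ) with ess inf V₀ > 0 and V₁ is a signed Radon measure on ℝ with finite total variation. Then the functional u ↦ I(u;V) is weakly sequentially lower semi-continuous on H¹(ℝ): if u_n → u weakly in H¹(ℝ), then I(u;V) ≤ liminf_{n→∞} I(u_n;V). -/
open MeasureTheory Filter Real Topology

/-- `I(u;V)` for a generalized potential `V = V₀ + V₁` with `V₀ ∈ L^∞(ℝ)` and
`V₁` a finite signed Radon measure:
`I(u;V) = ∫_ℝ (|u'|² + V₀|u|²) dx + ∫_ℝ |u|² dV₁`. -/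
noncomputable def Itot (V₀ : ℝ → ℝ) (V₁ : SignedMeasure ℝ) (u : ℝ → ℝ) : ℝ :=
  (∫ x : ℝ, ((deriv u x) ^ 2 + V₀ x * (u x) ^ 2)) + sMeasInt V₁ (fun x => (u x) ^ 2)

/-- The `H¹(ℝ)` inner product `(u,v)_{H¹} = ∫_ℝ (uv + u'v') dx`. -/
noncomputable def h1Inner (u v : ℝ → ℝ) : ℝ :=
  ∫ x : ℝ, (u x * v x + deriv u x * deriv v x)

/-- `u_n → u` weakly in `H¹(ℝ)`: each `u_n` and `u` lie in `H¹(ℝ)` and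
`(u_n, v)_{H¹} → (u, v)_{H¹}` for every `v ∈ H¹(ℝ)`. -/
def WeakH1Tendsto (un : ℕ → ℝ → ℝ) (u : ℝ → ℝ) : Prop :=
  (∀ n, IsH1 (un n)) ∧ IsH1 u ∧
    ∀ v : ℝ → ℝ, IsH1 v →
      Filter.Tendsto (fun n => h1Inner (un n) v) Filter.atTop (𝓝 (h1Inner u v))

namespace H1

noncomputable abbrev L2 := Lp ℝ 2 (volume : Measure ℝ)
noncomputable abbrev E := WithLp 2 (L2 × L2)

noncomputable def toE (f g : ℝ → ℝ) (hf : MemLp f 2 (volume : Measure ℝ))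
    (hg : MemLp g 2 (volume : Measure ℝ)) : E := WithLp.toLp 2 (hf.toLp f, hg.toLp g)

lemma inner_E (p : E) (f g : ℝ → ℝ) (hf : MemLp f 2 (volume : Measure ℝ))
    (hg : MemLp g 2 (volume : Measure ℝ)) :
    inner ℝ p (toE f g hf hg) = ∫ x, (p.fst x * f x + p.snd x * g x) := by
  rw [WithLp.prod_inner_apply]
  simp only [toE, MeasureTheory.L2.inner_def]
  rw [← integral_add (L2.integrable_inner _ _) (L2.integrable_inner _ _)]
  apply integral_congr_ae
  filter_upwards [hf.coeFn_toLp, hg.coeFn_toLp] with x h1 h2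
  simp [h1, h2, mul_comm]

def IsRep (p : E) (u : ℝ → ℝ) : Prop :=
  Continuous u ∧ (u =ᵐ[volume] p.fst) ∧ ∀ x : ℝ, u x = u 0 + ∫ t in (0:ℝ)..x, p.snd t

lemma locInt (g : L2) : LocallyIntegrable g volume :=
  (Lp.memLp g).locallyIntegrable (by norm_num)

lemma intervalInt (g : L2) (a b : ℝ) : IntervalIntegrable g volume a b :=
  intervalIntegrable_iff.mpr
    (((locInt g).integrableOn_isCompact isCompact_uIcc).mono_set Set.uIoc_subset_uIcc)

lemma IsRep.deriv {p : E} {u : ℝ → ℝ} (h : IsRep p u) : deriv u =ᵐ[volume] p.snd := by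
  filter_upwards [LocallyIntegrable.ae_hasDerivAt_integral (locInt p.snd)] with x hx
  have h1 := (hx 0).const_add (u 0)
  have : u = fun x => u 0 + ∫ t in (0:ℝ)..x, p.snd t := funext h.2.2
  rw [this]
  simpa using h1.deriv

lemma IsRep.isH1 {p : E} {u : ℝ → ℝ} (h : IsRep p u) : IsH1 u :=
  ⟨h.1, (memLp_congr_ae h.2.1).2 (Lp.memLp _), p.snd, Lp.memLp _, h.2.2⟩

lemma exists_rep {u : ℝ → ℝ} (h : IsH1 u) : ∃ p : E, IsRep p u := by
  obtain ⟨hc, hu, u', hu', hf⟩ := h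
  refine ⟨toE u u' hu hu', hc, hu.coeFn_toLp.symm, fun x => ?_⟩
  rw [hf x]
  congr 1
  apply intervalIntegral.integral_congr_ae
  filter_upwards [hu'.coeFn_toLp] with t ht _
  simp [toE, ht]

lemma IsRep.ac {p : E} {u : ℝ → ℝ} (h : IsRep p u) (a b : ℝ) :
    AbsolutelyContinuousOnInterval u a b := by
  have h1 := (intervalInt p.snd a b).absolutelyContinuousOnInterval_intervalIntegral
    (c := a) (by simp)
  have : u = fun x => u a + ∫ t in a..x, p.snd t := by
    funext x
    have := intervalIntegral.integral_add_adjacent_intervals (intervalInt p.snd 0 a)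
      (intervalInt p.snd a x)
    have h2 := h.2.2 x
    have h3 := h.2.2 a
    linarith
  rw [this]
  have hc : AbsolutelyContinuousOnInterval (fun _ : ℝ => u a) a b :=
    ((LipschitzWith.const (u a)).lipschitzOnWith (s := Set.uIcc a b)).absolutelyContinuousOnInterval
  exact hc.fun_add h1

lemma h1Inner_eq {p q : E} {u v : ℝ → ℝ} (hp : IsRep p u) (hq : IsRep q v) :
    h1Inner u v = inner ℝ p q := by
  rw [WithLp.prod_inner_apply]
  simp only [MeasureTheory.L2.inner_def]
  rw [← integral_add (L2.integrable_inner _ _) (L2.integrable_inner _ _)]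
  apply integral_congr_ae
  filter_upwards [hp.2.1, hq.2.1, hp.deriv, hq.deriv] with x h1 h2 h3 h4
  simp [h1, h2, h3, h4, mul_comm]

lemma memLp_ind (x : ℝ) (f : ℝ → ℝ) (hf : Continuous f)
    (hb : ∀ y ∈ Set.Ioc x (x+1), |f y| ≤ 1) :
    MemLp ((Set.Ioc x (x+1)).indicator f) 2 (volume : Measure ℝ) := by
  rw [memLp_indicator_iff_restrict measurableSet_Ioc]
  refine MemLp.of_bound hf.aestronglyMeasurable 1 ?_
  rw [ae_restrict_iff' measurableSet_Ioc]
  exact Eventually.of_forall hb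

noncomputable def ev (x : ℝ) : E :=
  toE _ _ (memLp_ind x (fun _ => 1) continuous_const (by simp))
    (memLp_ind x (fun y => y - (x + 1)) (by fun_prop)
      (fun y hy => abs_le.2 ⟨by linarith [hy.1], by linarith [hy.2]⟩))

lemma IsRep.eval {p : E} {u : ℝ → ℝ} (h : IsRep p u) (x : ℝ) : u x = inner ℝ p (ev x) := by
  have hl : AbsolutelyContinuousOnInterval (fun y : ℝ => y - (x+1)) x (x+1) :=
    (LipschitzOnWith.absolutelyContinuousOnInterval (K := 1)
      ((LipschitzWith.mk_one fun a b => by simp).lipschitzOnWith))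
  have := hl.integral_deriv_mul_eq_sub (h.ac x (x+1))
  have e : (x - (x+1)) * u x = - u x := by ring
  simp only [sub_self, zero_mul, e, zero_sub, neg_neg] at this
  rw [ev, inner_E, ← this, intervalIntegral.integral_of_le (by linarith),
    ← integral_indicator measurableSet_Ioc]
  apply integral_congr_ae
  filter_upwards [h.2.1, h.deriv] with y h1 h2
  by_cases hy : y ∈ Set.Ioc x (x+1)
  · simp only [Set.indicator_of_mem hy, h1, h2]
    have : _root_.deriv (fun y : ℝ => y - (x+1)) y = 1 := by simp
    rw [this]; ring
  · simp [Set.indicator_of_notMem hy]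

lemma norm_ev (x : ℝ) : ‖ev x‖ ^ 2 ≤ 2 := by
  rw [← real_inner_self_eq_norm_sq]
  have h0 : inner ℝ (ev x) (ev x) = ∫ y, ((ev x).fst y * (Set.Ioc x (x+1)).indicator (fun _ => 1) y
    + (ev x).snd y * (Set.Ioc x (x+1)).indicator (fun y => y - (x+1)) y) := inner_E _ _ _ _ _
  have : ∫ y, (Set.Ioc x (x+1)).indicator (fun _ => (2:ℝ)) y = 2 := by
    rw [integral_indicator measurableSet_Ioc]; simp
  have h1 : (ev x).fst =ᵐ[volume] (Set.Ioc x (x+1)).indicator (fun _ => 1) :=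
    MemLp.coeFn_toLp (memLp_ind x (fun _ => 1) continuous_const (by simp))
  have h2 : (ev x).snd =ᵐ[volume] (Set.Ioc x (x+1)).indicator (fun y => y - (x+1)) :=
    MemLp.coeFn_toLp (memLp_ind x (fun y => y - (x + 1)) (by fun_prop)
      (fun y hy => abs_le.2 ⟨by linarith [hy.1], by linarith [hy.2]⟩))
  rw [h0, ← this]
  apply integral_mono_of_nonneg
  · filter_upwards [h1, h2] with y h1 h2
    rw [h1, h2]
    exact add_nonneg (mul_self_nonneg _) (mul_self_nonneg _)
  · rw [integrable_indicator_iff measurableSet_Ioc]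
    simp
  · filter_upwards [h1, h2] with y h1 h2
    simp only [h1, h2]
    by_cases hy : y ∈ Set.Ioc x (x+1)
    · simp only [Set.indicator_of_mem hy]
      nlinarith [hy.1, hy.2]
    · simp [Set.indicator_of_notMem hy]

noncomputable def H : Submodule ℝ E where
  carrier := {p | ∃ u, IsRep p u}
  zero_mem' := ⟨0, continuous_zero, (Lp.coeFn_zero ℝ 2 volume).symm, fun x => by
    have : ∫ t in (0:ℝ)..x, (0 : E).snd t = ∫ t in (0:ℝ)..x, (0:ℝ) := by
      apply intervalIntegral.integral_congr_ae
      filter_upwards [Lp.coeFn_zero ℝ 2 (volume : Measure ℝ)] with t ht _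
      exact ht
    rw [this]; simp⟩
  add_mem' := by
    rintro p q ⟨u, hu⟩ ⟨v, hv⟩
    refine ⟨u + v, hu.1.add hv.1, ?_, fun x => ?_⟩
    · filter_upwards [hu.2.1, hv.2.1, Lp.coeFn_add p.fst q.fst] with x h1 h2 h3
      simp only [WithLp.add_fst, h3, Pi.add_apply, h1, h2]
    · have : ∫ t in (0:ℝ)..x, (p + q).snd t = ∫ t in (0:ℝ)..x, (p.snd t + q.snd t) := by
        apply intervalIntegral.integral_congr_ae
        filter_upwards [Lp.coeFn_add p.snd q.snd] with t ht _
        exact ht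
      rw [this, intervalIntegral.integral_add (intervalInt _ _ _) (intervalInt _ _ _)]
      simp only [Pi.add_apply]
      rw [hu.2.2 x, hv.2.2 x]; ring
  smul_mem' := by
    rintro c p ⟨u, hu⟩
    refine ⟨c • u, hu.1.const_smul c, ?_, fun x => ?_⟩
    · filter_upwards [hu.2.1, Lp.coeFn_smul c p.fst] with x h1 h3
      simp only [WithLp.smul_fst, h3, Pi.smul_apply, h1]
    · have : ∫ t in (0:ℝ)..x, (c • p).snd t = ∫ t in (0:ℝ)..x, (c * p.snd t) := by
        apply intervalIntegral.integral_congr_ae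
        filter_upwards [Lp.coeFn_smul c p.snd] with t ht _
        exact ht
      rw [this, intervalIntegral.integral_const_mul]
      simp only [Pi.smul_apply, smul_eq_mul]
      rw [hu.2.2 x]; ring

lemma memLp_Ioc (a b : ℝ) :
    MemLp ((Set.Ioc a b).indicator (fun _ => (1:ℝ))) 2 (volume : Measure ℝ) := by
  rw [memLp_indicator_iff_restrict measurableSet_Ioc]
  exact memLp_const _

lemma integral_Ioc_eq (p : E) (a b : ℝ) : ∫ t in Set.Ioc a b, p.snd t =
    inner ℝ p (toE 0 _ MemLp.zero' (memLp_Ioc a b)) := by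
  rw [inner_E, ← integral_indicator measurableSet_Ioc]
  congr 1
  funext x
  by_cases hx : x ∈ Set.Ioc a b
  · simp [Set.indicator_of_mem hx]
  · simp [Set.indicator_of_notMem hx]

lemma tendsto_interval {pn : ℕ → E} {p : E} (h : Tendsto pn atTop (𝓝 p)) (a b : ℝ) :
    Tendsto (fun n => ∫ t in a..b, (pn n).snd t) atTop (𝓝 (∫ t in a..b, p.snd t)) := by
  simp only [intervalIntegral, integral_Ioc_eq]
  exact (h.inner tendsto_const_nhds).sub (h.inner tendsto_const_nhds)

lemma isClosed_H : IsClosed (H : Set E) := by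
  apply IsSeqClosed.isClosed
  intro pn p hpn hp
  choose un hun using hpn
  have h1 : ∀ x, Tendsto (fun n => un n x) atTop (𝓝 (inner ℝ p (ev x))) := by
    intro x
    simp only [fun n => (hun n).eval x]
    exact hp.inner tendsto_const_nhds
  have h2 : ∀ x, inner ℝ p (ev x) = inner ℝ p (ev 0) + ∫ t in (0:ℝ)..x, p.snd t := by
    intro x
    refine tendsto_nhds_unique (h1 x) ?_
    have := (h1 0).add (tendsto_interval hp 0 x)
    refine this.congr fun n => ?_
    exact ((hun n).2.2 x).symm
  refine ⟨fun x => inner ℝ p (ev x), ?_, ?_, h2⟩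
  · rw [funext h2]
    exact continuous_const.add (intervalIntegral.continuous_primitive (intervalInt _) 0)
  · have h3 : Tendsto (fun n => (pn n).fst) atTop (𝓝 p.fst) :=
      ((WithLp.prod_continuous_ofLp 2 L2 L2).fst.tendsto p).comp hp
    obtain ⟨φ, hφ, h4⟩ := (tendstoInMeasure_of_tendsto_Lp h3).exists_seq_tendsto_ae
    filter_upwards [h4, ae_all_iff.2 fun n => (hun n).2.1] with x h5 h6
    refine tendsto_nhds_unique ((h1 x).comp hφ.tendsto_atTop) ?_
    refine h5.congr fun n => ?_
    exact (h6 (φ n)).symm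

lemma weak_E {pn : ℕ → E} {p : E} (hpn : ∀ n, pn n ∈ H) (hp : p ∈ H)
    (h : ∀ q ∈ H, Tendsto (fun n => inner ℝ (pn n) q) atTop (𝓝 (inner ℝ p q))) (e : E) :
    Tendsto (fun n => inner ℝ (pn n) e) atTop (𝓝 (inner ℝ p e)) := by
  have : CompleteSpace H := isClosed_H.completeSpace_coe
  obtain ⟨y, hy, z, hz, rfl⟩ := H.exists_add_mem_mem_orthogonal e
  have hz' : ∀ q ∈ H, inner ℝ q z = 0 := fun q hq => hz q hq
  simp only [inner_add_right, hz' _ (hpn _), hz' _ hp, add_zero]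
  exact h y hy

lemma weak_bdd {pn : ℕ → E} {p : E}
    (h : ∀ q, Tendsto (fun n => inner ℝ (pn n) q) atTop (𝓝 (inner ℝ p q))) :
    ∃ C, ∀ n, ‖pn n‖ ≤ C := by
  obtain ⟨C, hC⟩ := banach_steinhaus (g := fun n => innerSL ℝ (pn n)) (fun q => by
    obtain ⟨C, hC⟩ := (h q).norm.bddAbove_range
    exact ⟨C, fun n => hC ⟨n, rfl⟩⟩)
  exact ⟨C, fun n => by simpa using hC n⟩

lemma IsRep.bound {p : E} {u : ℝ → ℝ} (h : IsRep p u) (x : ℝ) : u x ^ 2 ≤ 2 * ‖p‖ ^ 2 := by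
  rw [h.eval x, ← sq_abs]
  have h1 := abs_real_inner_le_norm p (ev x)
  have h2 := norm_ev x
  calc |inner ℝ p (ev x)| ^ 2 ≤ (‖p‖ * ‖ev x‖) ^ 2 := by gcongr
    _ = ‖p‖ ^ 2 * ‖ev x‖ ^ 2 := by ring
    _ ≤ ‖p‖ ^ 2 * 2 := by gcongr
    _ = _ := by ring

lemma tendsto_meas {un : ℕ → ℝ → ℝ} {u : ℝ → ℝ} (hc : ∀ n, Continuous (un n)) {C : ℝ}
    (hb : ∀ n x, un n x ^ 2 ≤ C) (ht : ∀ x, Tendsto (fun n => un n x) atTop (𝓝 (u x)))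
    (μ : Measure ℝ) [IsFiniteMeasure μ] :
    Tendsto (fun n => ∫ x, un n x ^ 2 ∂μ) atTop (𝓝 (∫ x, u x ^ 2 ∂μ)) := by
  refine tendsto_integral_of_dominated_convergence (fun _ => C) ?_ (integrable_const _) ?_ ?_
  · exact fun n => ((hc n).pow 2).aestronglyMeasurable
  · exact fun n => Eventually.of_forall fun x => by
      rw [Real.norm_eq_abs, abs_of_nonneg (sq_nonneg _)]; exact hb n x
  · exact Eventually.of_forall fun x => (ht x).pow 2

lemma main (V₀ : ℝ → ℝ) (hV₀ : MemLp V₀ ⊤ (volume : Measure ℝ))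
    (hpos : 0 < essInf V₀ (volume : Measure ℝ)) (V₁ : SignedMeasure ℝ)
    (un : ℕ → ℝ → ℝ) (u : ℝ → ℝ) (hw : WeakH1Tendsto un u) :
    Itot V₀ V₁ u ≤ Filter.liminf (fun n => Itot V₀ V₁ (un n)) Filter.atTop := by
  obtain ⟨hun, hu, hw⟩ := hw
  choose pn hpn using fun n => exists_rep (hun n)
  obtain ⟨p, hp⟩ := exists_rep hu
  have hweak := weak_E (fun n => ⟨un n, hpn n⟩) ⟨u, hp⟩ (fun q ⟨v, hv⟩ => by
    have := hw v hv.isH1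
    simpa only [h1Inner_eq hp hv, h1Inner_eq (hpn _) hv] using this)
  obtain ⟨C, hC⟩ := weak_bdd hweak
  have hpt : ∀ x, Tendsto (fun n => un n x) atTop (𝓝 (u x)) := fun x => by
    simp only [hp.eval x, (hpn _).eval x]
    exact hweak (ev x)
  have hbd : ∀ n x, un n x ^ 2 ≤ 2 * C ^ 2 := fun n x =>
    ((hpn n).bound x).trans (by have := hC n; gcongr)
  have hsm : Tendsto (fun n => sMeasInt V₁ (fun x => un n x ^ 2)) atTop
      (𝓝 (sMeasInt V₁ (fun x => u x ^ 2))) :=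
    (tendsto_meas (fun n => (hun n).1) hbd hpt _).sub
      (tendsto_meas (fun n => (hun n).1) hbd hpt _)
  -- the potential
  obtain ⟨M, hM⟩ : ∃ M : ℝ, ∀ᵐ x, |V₀ x| ≤ M :=
    ⟨_, ae_le_lpNorm_exponent_top hV₀⟩
  have hM0 : 0 ≤ M := by
    obtain ⟨x, hx⟩ := hM.exists
    exact (abs_nonneg _).trans hx
  have hVnn : ∀ᵐ x, 0 ≤ V₀ x := by
    have := ae_essInf_le (f := V₀) (μ := volume) ⟨-M, by
      rw [eventually_map]
      filter_upwards [hM] with x hx using (abs_le.1 hx).1⟩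
    filter_upwards [this] with x hx using hpos.le.trans hx
  have hVu : MemLp (fun x => V₀ x * u x) 2 volume := hu.2.1.mul hV₀
  have hd : ∀ {q : E} {v : ℝ → ℝ}, IsRep q v → MemLp (deriv v) 2 volume := fun h =>
    (memLp_congr_ae h.deriv).2 (Lp.memLp _)
  have hint : ∀ {q : E} {v : ℝ → ℝ}, IsRep q v →
      Integrable (fun x => deriv v x ^ 2 + V₀ x * v x ^ 2) := fun h => by
    refine (hd h).integrable_sq.add ?_
    have h3 : MemLp (fun x => V₀ x * _) 2 volume := h.isH1.2.1.mul hV₀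
    refine (h3.integrable_mul h.isH1.2.1).congr (Eventually.of_forall fun x => ?_)
    simp only [Pi.mul_apply]; ring
  set Q : (ℝ → ℝ) → ℝ := fun v => ∫ x, (deriv v x ^ 2 + V₀ x * v x ^ 2) with hQ
  set e : E := toE (fun x => V₀ x * u x) (deriv u) hVu (hd hp) with he
  have hB : ∀ {q : E} {v : ℝ → ℝ}, IsRep q v → inner ℝ q e =
      ∫ x, (v x * (V₀ x * u x) + deriv v x * deriv u x) := fun h => by
    rw [he, inner_E]
    apply integral_congr_ae
    filter_upwards [h.2.1, h.deriv] with x h1 h2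
    rw [h1, h2]
  have hBi : ∀ {q : E} {v : ℝ → ℝ}, IsRep q v → 
      Integrable (fun x => (v x * (V₀ x * u x) + deriv v x * deriv u x)) := fun h =>
    (h.isH1.2.1.integrable_mul hVu).add ((hd h).integrable_mul (hd hp))
  have hBu : inner ℝ p e = Q u := by
    rw [hB hp, hQ]
    congr 1; funext x; ring
  have hlow : ∀ n, 2 * inner ℝ (pn n) e - Q u ≤ Q (un n) := fun n => by
    rw [hB (hpn n), hQ, ← integral_const_mul, ← integral_sub ((hBi (hpn n)).const_mul 2) (hint hp)]
    refine integral_mono_ae (((hBi (hpn n)).const_mul 2).sub (hint hp)) (hint (hpn n)) ?_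
    filter_upwards [hVnn] with x hx
    nlinarith [sq_nonneg (deriv (un n) x - deriv u x), mul_nonneg hx (sq_nonneg (un n x - u x))]
  have hup : ∀ n, Q (un n) ≤ (1 + M) * C ^ 2 := fun n => by
    have h1 : inner ℝ (pn n) (pn n) = ‖pn n‖ ^ 2 := real_inner_self_eq_norm_sq _
    rw [← h1Inner_eq (hpn n) (hpn n), h1Inner] at h1
    have h2 : Q (un n) ≤ (1 + M) * ∫ x, (un n x * un n x + deriv (un n) x * deriv (un n) x) := by
      rw [← integral_const_mul]
      refine integral_mono_ae (hint (hpn n)) (Integrable.const_mul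
        (((hun n).2.1.integrable_mul (hun n).2.1).add
        ((hd (hpn n)).integrable_mul (hd (hpn n)))) _) ?_
      filter_upwards [hM] with x hx
      have := (abs_le.1 hx).2
      nlinarith [mul_nonneg (sub_nonneg.2 this) (sq_nonneg (un n x)), sq_nonneg (un n x),
        mul_nonneg hM0 (sq_nonneg (deriv (un n) x))]
    rw [h1] at h2
    refine h2.trans ?_
    have := hC n
    gcongr
  have hlim : Tendsto (fun n => (2 * inner ℝ (pn n) e - Q u) + sMeasInt V₁ (fun x => un n x ^ 2))
      atTop (𝓝 (Itot V₀ V₁ u)) := by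
    have := (((hweak e).const_mul 2).sub_const (Q u)).add hsm
    rw [hBu] at this
    convert this using 2
    rw [Itot, hQ]; ring
  rw [← hlim.liminf_eq]
  refine liminf_le_liminf (Eventually.of_forall fun n => ?_) hlim.isBoundedUnder_ge ?_
  · exact add_le_add_left (hlow n) _
  · obtain ⟨K, hK⟩ := hsm.isBoundedUnder_le
    refine IsBoundedUnder.isCoboundedUnder_ge ⟨(1 + M) * C ^ 2 + K, ?_⟩
    rw [eventually_map] at hK ⊢
    filter_upwards [hK] with n hn
    exact add_le_add (hup n) hn

end H1

/-- **Weak lower semicontinuity of `I(·;V)`.** For `V = V₀ + V₁` with `V₀ ∈ L^∞(ℝ)`,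
`ess inf V₀ > 0`, and `V₁` a finite signed Radon measure: if `u_n → u` weakly in `H¹(ℝ)`,
then `I(u;V) ≤ liminf_{n→∞} I(u_n;V)`. -/
theorem Itot_weakly_lsc (V₀ : ℝ → ℝ) (hV₀ : MemLp V₀ ⊤ (volume : Measure ℝ))
    (hpos : 0 < essInf V₀ (volume : Measure ℝ)) (V₁ : SignedMeasure ℝ)
    (un : ℕ → ℝ → ℝ) (u : ℝ → ℝ) (hw : WeakH1Tendsto un u) :
    Itot V₀ V₁ u ≤ Filter.liminf (fun n => Itot V₀ V₁ (un n)) Filter.atTop := by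
  exact H1.main V₀ hV₀ hpos V₁ un u hw
end

section
/- Let V = V₀ + V₁ where V₀ ∈ L^∞(ℝ) with ess inf V₀ > 0 and V₁ is a signed Radon measure on ℝ with finite total variation, and suppose u_n → u weakly in H¹(ℝ). Then lim_{n→∞} ∫_ℝ |u_n|² dV₁ = ∫_ℝ |u|² dV₁. -/
open MeasureTheory Filter Real Topology

lemma rep_ac {u u' : ℝ → ℝ} (h : LocallyIntegrable u' volume)
    (hu : ∀ x, u x = u 0 + ∫ t in (0:ℝ)..x, u' t) (a b : ℝ) :
    AbsolutelyContinuousOnInterval u a b := by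
  have hii : ∀ x y, IntervalIntegrable u' volume x y := fun x y =>
    (h.integrableOn_isCompact isCompact_uIcc).intervalIntegrable
  have h1 := (hii (min (min a b) 0) (max (max a b) 0)).absolutelyContinuousOnInterval_intervalIntegral
    (c := 0) (by rw [Set.uIcc_of_le (by simp)]; simp)
  have h2 : AbsolutelyContinuousOnInterval (fun _ : ℝ => u 0) (min (min a b) 0) (max (max a b) 0) :=
    (LipschitzOnWith.absolutelyContinuousOnInterval (K := 0) ((LipschitzWith.const (u 0)).lipschitzOnWith))
  have h3 := (h2.add h1).mono (c := a) (d := b) (by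
    rw [Set.uIcc_of_le (show (min (min a b) 0) ≤ (max (max a b) 0) by simp)]
    exact Set.Icc_subset_Icc (by simp) (by simp))
  have : u = (fun _ : ℝ => u 0) + fun x => ∫ t in (0:ℝ)..x, u' t := funext fun x => hu x
  rw [this]; exact h3

lemma rep_deriv {u u' : ℝ → ℝ} (h : LocallyIntegrable u' volume)
    (hu : ∀ x, u x = u 0 + ∫ t in (0:ℝ)..x, u' t) : deriv u =ᵐ[volume] u' := by
  filter_upwards [_root_.LocallyIntegrable.ae_hasDerivAt_integral h] with x hx
  have : u = fun x => u 0 + ∫ t in (0:ℝ)..x, u' t := funext fun x => hu x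
  rw [this]
  exact ((hx 0).const_add (u 0)).deriv

lemma IsH1.ac {u : ℝ → ℝ} (h : IsH1 u) (a b : ℝ) : AbsolutelyContinuousOnInterval u a b := by
  obtain ⟨_, _, u', h1, h2⟩ := h
  exact rep_ac (h1.locallyIntegrable (by norm_num)) h2 a b

lemma IsH1.memLp_deriv {u : ℝ → ℝ} (h : IsH1 u) : MemLp (deriv u) 2 volume := by
  obtain ⟨_, _, u', h1, h2⟩ := h
  exact h1.ae_eq (rep_deriv (h1.locallyIntegrable (by norm_num)) h2).symm

lemma IsH1.parts {u v : ℝ → ℝ} (hu : IsH1 u) (hv : IsH1 v) :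
    (∫ x, (deriv u x * v x + u x * deriv v x) = 0) ∧
      Tendsto (fun x => u x * v x) atBot (𝓝 0) := by
  set h : ℝ → ℝ := fun x => deriv u x * v x + u x * deriv v x with hh
  have hi : Integrable h := (hu.memLp_deriv.integrable_mul hv.2.1).add
    (hu.2.1.integrable_mul hv.memLp_deriv)
  have huv : Integrable (fun x => u x * v x) := hu.2.1.integrable_mul hv.2.1
  have key : ∀ a b, ∫ x in a..b, h x = u b * v b - u a * v a := fun a b =>
    (hu.ac a b).integral_deriv_mul_eq_sub (hv.ac a b)
  have top : Tendsto (fun x => u x * v x) atTop (𝓝 (u 0 * v 0 + ∫ x in Set.Ioi 0, h x)) := by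
    have := (intervalIntegral_tendsto_integral_Ioi 0 hi.integrableOn tendsto_id).const_add (u 0 * v 0)
    refine this.congr fun x => ?_
    rw [key]; simp
  have bot : Tendsto (fun x => u x * v x) atBot (𝓝 (u 0 * v 0 - ∫ x in Set.Iic 0, h x)) := by
    have := (intervalIntegral_tendsto_integral_Iic 0 hi.integrableOn tendsto_id).const_sub (u 0 * v 0)
    refine this.congr fun x => ?_
    rw [key]; simp
  have t0 := IntegrableAtFilter.eq_zero_of_tendsto (l := atTop) (μ := volume)
    (huv.integrableAtFilter _) (by
      intro s hs
      rcases mem_atTop_sets.1 hs with ⟨b, hb⟩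
      rw [← top_le_iff, ← volume_Ici (a := b)]
      exact measure_mono hb) top
  have b0 := IntegrableAtFilter.eq_zero_of_tendsto (l := atBot) (μ := volume)
    (huv.integrableAtFilter _) (by
      intro s hs
      rcases mem_atBot_sets.1 hs with ⟨b, hb⟩
      rw [← top_le_iff, ← volume_Iic (a := b)]
      exact measure_mono hb) bot
  refine ⟨?_, b0 ▸ bot⟩
  have := intervalIntegral.integral_Iic_add_Ioi (b := 0) hi.integrableOn hi.integrableOn
  rw [← this]; linarith

lemma IsH1.inner_eq {u v : ℝ → ℝ} (hu : IsH1 u) (hv : IsH1 v) :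
    h1Inner u v = ∫ x, (u x + deriv u x) * (v x + deriv v x) := by
  have h1 : Integrable (fun x => u x * v x + deriv u x * deriv v x) :=
    (hu.2.1.integrable_mul hv.2.1).add (hu.memLp_deriv.integrable_mul hv.memLp_deriv)
  have h2 : Integrable (fun x => deriv u x * v x + u x * deriv v x) :=
    (hu.memLp_deriv.integrable_mul hv.2.1).add (hu.2.1.integrable_mul hv.memLp_deriv)
  have := integral_add h1 h2
  rw [(hu.parts hv).1, add_zero] at this
  rw [h1Inner, ← this]
  congr 1; ext x; ring

noncomputable def kerK (x : ℝ) : ℝ → ℝ := Set.indicator (Set.Iic x) (fun t => exp (t - x))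

lemma kerK_sq_int (x : ℝ) : Integrable (fun t => kerK x t ^ 2) ∧ ∫ t, kerK x t ^ 2 ≤ 1 := by
  have m : Measurable (kerK x) := Measurable.indicator (by fun_prop) measurableSet_Iic
  have e : (fun t => exp (t - x)) = fun t => exp t * exp (-x) := by
    ext t; rw [← exp_add]; rfl
  have h1 : Integrable (kerK x) := by
    rw [kerK, integrable_indicator_iff measurableSet_Iic, e]
    exact (integrableOn_exp_Iic x).mul_const _
  have h2 : ∫ t, kerK x t = 1 := by
    rw [kerK, integral_indicator measurableSet_Iic, e, integral_mul_const, integral_exp_Iic,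
      ← exp_add]; simp
  have h3 : ∀ t, 0 ≤ kerK x t ∧ kerK x t ≤ 1 := by
    intro t
    by_cases ht : t ∈ Set.Iic x
    · simp only [kerK, Set.indicator_of_mem ht]
      refine ⟨(exp_pos _).le, exp_le_one_iff.2 ?_⟩
      have : t ≤ x := ht
      linarith
    · simp [kerK, Set.indicator_of_notMem ht]
  have h4 : ∀ t, kerK x t ^ 2 ≤ kerK x t := fun t => by nlinarith [h3 t]
  have h5 : Integrable (fun t => kerK x t ^ 2) := by
    refine h1.mono (by fun_prop) (Eventually.of_forall fun t => ?_)
    rw [norm_of_nonneg (sq_nonneg _), norm_of_nonneg (h3 t).1]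
    exact h4 t
  exact ⟨h5, h2 ▸ integral_mono h5 h1 h4⟩

lemma kerK_memLp (x : ℝ) : MemLp (kerK x) 2 volume := by
  have m : Measurable (kerK x) := Measurable.indicator (by fun_prop) measurableSet_Iic
  exact (memLp_two_iff_integrable_sq m.aestronglyMeasurable).2 (kerK_sq_int x).1

lemma inner_toLp {f g : ℝ → ℝ} (hf : MemLp f 2 volume) (hg : MemLp g 2 volume) :
    inner ℝ (hf.toLp f) (hg.toLp g) = ∫ x, f x * g x := by
  rw [L2.inner_def]
  apply integral_congr_ae
  filter_upwards [hf.coeFn_toLp, hg.coeFn_toLp] with x h1 h2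
  rw [h1, h2]; simp [mul_comm]

lemma kerK_norm (x : ℝ) : ‖(kerK_memLp x).toLp (kerK x)‖ ≤ 1 := by
  have h := inner_toLp (kerK_memLp x) (kerK_memLp x)
  rw [real_inner_self_eq_norm_sq] at h
  have h2 := (kerK_sq_int x).2
  simp only [pow_two] at h2 h
  nlinarith [norm_nonneg ((kerK_memLp x).toLp (kerK x))]

lemma J_bound {f : ℝ → ℝ} (hf : MemLp f 2 volume) (x : ℝ) :
    |∫ t, kerK x t * f t| ≤ ‖hf.toLp f‖ := by
  rw [← inner_toLp (kerK_memLp x) hf]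
  refine (abs_real_inner_le_norm _ _).trans ?_
  nlinarith [kerK_norm x, norm_nonneg (hf.toLp f)]

lemma expf_int {f : ℝ → ℝ} (hf : MemLp f 2 volume) (x : ℝ) :
    IntegrableOn (fun t => exp t * f t) (Set.Iic x) := by
  have := ((kerK_memLp x).integrable_mul hf).const_mul (exp x)
  rw [← integrable_indicator_iff measurableSet_Iic]
  refine this.congr (Eventually.of_forall fun t => ?_)
  by_cases ht : t ∈ Set.Iic x
  · simp only [Pi.mul_apply, kerK, Set.indicator_of_mem ht, exp_sub]
    field_simp
  · simp [kerK, Set.indicator_of_notMem ht]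

lemma J_eq (f : ℝ → ℝ) (x : ℝ) :
    ∫ t, kerK x t * f t = exp (-x) * ∫ t in Set.Iic x, exp t * f t := by
  rw [← integral_indicator measurableSet_Iic, ← integral_const_mul]
  congr 1; ext t
  by_cases ht : t ∈ Set.Iic x
  · simp only [kerK, Set.indicator_of_mem ht, ← mul_assoc, ← exp_add]
    congr 2; ring
  · simp [kerK, Set.indicator_of_notMem ht]

lemma IsH1.memLp_w {u : ℝ → ℝ} (h : IsH1 u) : MemLp (fun x => u x + deriv u x) 2 volume :=
  h.2.1.add h.memLp_deriv

lemma exp_ac (a b : ℝ) : AbsolutelyContinuousOnInterval exp a b :=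
  (contDiff_exp (n := 1)).contDiffOn.absolutelyContinuousOnInterval

lemma IsH1.eq_J {u : ℝ → ℝ} (h : IsH1 u) (x : ℝ) :
    u x = ∫ t, kerK x t * (u t + deriv u t) := by
  rw [J_eq]
  have h1 := intervalIntegral_tendsto_integral_Iic x (expf_int h.memLp_w x) tendsto_id
  have h2 : ∀ a, ∫ t in a..x, exp t * (u t + deriv u t) = exp x * u x - exp a * u a := by
    intro a
    rw [← (exp_ac a x).integral_deriv_mul_eq_sub (h.ac a x)]
    congr 1; ext t; simp; ring
  have h3 : Tendsto u atBot (𝓝 0) := by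
    have := (h.parts h).2.sqrt
    simp only [Real.sqrt_mul_self_eq_abs, Real.sqrt_zero] at this
    exact (tendsto_zero_iff_abs_tendsto_zero _).2 this
  have h4 := (tendsto_exp_atBot.mul h3).const_sub (exp x * u x)
  have := tendsto_nhds_unique h1 (h4.congr fun a => (h2 a).symm)
  rw [this, exp_neg]; field_simp; simp

lemma J_isH1 {f : ℝ → ℝ} (hf : MemLp f 2 volume) :
    ∃ v, IsH1 v ∧ (fun x => v x + deriv v x) =ᵐ[volume] f := by
  set F : ℝ → ℝ := fun x => ∫ t in Set.Iic x, exp t * f t with hF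
  set v : ℝ → ℝ := fun x => exp (-x) * F x with hv
  have hfl : LocallyIntegrable f volume := hf.locallyIntegrable (by norm_num)
  have hel : LocallyIntegrable (fun t => exp t * f t) volume := fun x =>
    ⟨Set.Iic (x+1), Iic_mem_nhds (by simp), expf_int hf _⟩
  have hFr : ∀ x, F x = F 0 + ∫ t in (0:ℝ)..x, exp t * f t := by
    intro x
    rw [← intervalIntegral.integral_Iic_sub_Iic (expf_int hf 0) (expf_int hf x)]
    simp [hF]
  have Fac := rep_ac hel hFr
  have Fd := rep_deriv hel hFr
  have eac : ∀ a b, AbsolutelyContinuousOnInterval (fun x => exp (-x)) a b := fun a b =>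
    (contDiff_exp.comp contDiff_neg (n := 1)).contDiffOn.absolutelyContinuousOnInterval
  have ed : ∀ x : ℝ, deriv (fun x => exp (-x)) x = - exp (-x) := by
    intro x; simpa using (hasDerivAt_neg x).exp.deriv
  have vac : ∀ a b, AbsolutelyContinuousOnInterval v a b := fun a b => (eac a b).fun_mul (Fac a b)
  have vc : Continuous v := by
    rw [continuous_iff_continuousAt]
    intro x
    refine ((vac (x-1) (x+1)).continuousOn).continuousAt ?_
    rw [Set.uIcc_of_le (by linarith)]
    exact Icc_mem_nhds (by linarith) (by linarith)
  have hgl : LocallyIntegrable (fun x => f x - v x) volume := hfl.sub vc.locallyIntegrable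
  have vr : ∀ x, v x = v 0 + ∫ t in (0:ℝ)..x, (f t - v t) := by
    intro x
    have : ∫ t in (0:ℝ)..x, (f t - v t) = v x - v 0 := by
      rw [← (eac 0 x).integral_deriv_mul_eq_sub (Fac 0 x)]
      apply intervalIntegral.integral_congr_ae
      filter_upwards [Fd] with t ht _
      rw [ht, ed, ← mul_assoc, ← exp_add]
      simp [hv]; ring
    linarith
  have vd := rep_deriv hgl vr
  have vb : ∀ x, |v x| ≤ ‖hf.toLp f‖ := fun x => by
    rw [hv, hF]; simp only; rw [← J_eq]; exact J_bound hf x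
  have fsq : Integrable (fun x => f x ^ 2) := hf.integrable_sq
  have ii : ∀ {g : ℝ → ℝ} (_ : LocallyIntegrable g volume) a b, IntervalIntegrable g volume a b :=
    fun h a b => (h.integrableOn_isCompact isCompact_uIcc).intervalIntegrable
  have vsq : Integrable (fun x => v x ^ 2) := by
    refine integrable_of_intervalIntegral_norm_bounded (l := atTop) (a := fun n : ℝ => -n) (b := fun n : ℝ => n)
      (‖hf.toLp f‖ ^ 2 + ∫ x, f x ^ 2) (fun i => ?_) tendsto_neg_atTop_atBot tendsto_id ?_
    · exact ((vc.pow 2).integrableOn_Icc).mono_set Set.Ioc_subset_Icc_self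
    · filter_upwards [eventually_ge_atTop 0] with n hn
      have hn' : -n ≤ n := by linarith
      have e1 := (vac (-n) n).integral_deriv_mul_eq_sub (vac (-n) n)
      have e2 : ∫ x in (-n)..n, (deriv v x * v x + v x * deriv v x)
          = ∫ x in (-n)..n, 2 * (v x * (f x - v x)) := by
        apply intervalIntegral.integral_congr_ae
        filter_upwards [vd] with t ht _
        rw [ht]; ring
      have i1 : IntervalIntegrable (fun x => 2 * (v x * (f x - v x))) volume (-n) n :=
        ((ii hgl _ _).continuousOn_mul vc.continuousOn).const_mul 2
      have i2 : IntervalIntegrable (fun x => v x ^ 2) volume (-n) n :=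
        (vc.pow 2).intervalIntegrable _ _
      have i3 : IntervalIntegrable (fun x => f x ^ 2) volume (-n) n := fsq.intervalIntegrable
      have e3 : ∫ x in (-n)..n, 2 * (v x * (f x - v x)) ≤ ∫ x in (-n)..n, (f x ^ 2 - v x ^ 2) := by
        refine intervalIntegral.integral_mono_on hn' i1 (i3.sub i2) fun x _ => ?_
        nlinarith [sq_nonneg (f x - v x)]
      rw [intervalIntegral.integral_sub i3 i2] at e3
      have e4 : ∫ x in (-n)..n, f x ^ 2 ≤ ∫ x, f x ^ 2 := by
        rw [intervalIntegral.integral_of_le hn']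
        exact setIntegral_le_integral fsq (Eventually.of_forall fun x => sq_nonneg _)
      have e5 : v (-n) ^ 2 ≤ ‖hf.toLp f‖ ^ 2 := sq_le_sq' (abs_le.1 (vb _)).1 (abs_le.1 (vb _)).2
      have e6 : ∫ x in (-n)..n, ‖v x ^ 2‖ = ∫ x in (-n)..n, v x ^ 2 := by
        congr 1; ext x; exact norm_of_nonneg (sq_nonneg _)
      rw [e6]
      nlinarith [sq_nonneg (v n)]
  have vL : MemLp v 2 volume := (memLp_two_iff_integrable_sq vc.aestronglyMeasurable).2 vsq
  refine ⟨v, ⟨vc, vL, _, hf.sub vL, vr⟩, ?_⟩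
  filter_upwards [vd] with x hx
  rw [hx]; ring

lemma weak_bound {un : ℕ → ℝ → ℝ} {u : ℝ → ℝ} (hw : WeakH1Tendsto un u) :
    (∀ x, Tendsto (fun n => un n x) atTop (𝓝 (u x))) ∧ ∃ C, ∀ n x, |un n x| ≤ C := by
  obtain ⟨hn, hu, hv⟩ := hw
  have main : ∀ {f : ℝ → ℝ} (_ : MemLp f 2 volume),
      Tendsto (fun n => ∫ x, f x * (un n x + deriv (un n) x)) atTop
        (𝓝 (∫ x, f x * (u x + deriv u x))) := by
    intro f hf
    obtain ⟨v, hv1, hv2⟩ := J_isH1 hf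
    have e : ∀ {w : ℝ → ℝ} (_ : IsH1 w), h1Inner w v = ∫ x, f x * (w x + deriv w x) := by
      intro w h
      rw [h.inner_eq hv1]
      apply integral_congr_ae
      filter_upwards [hv2] with x hx
      rw [hx, mul_comm]
    have := hv v hv1
    rw [e hu] at this
    exact this.congr fun n => e (hn n)
  constructor
  · intro x
    rw [hu.eq_J x]
    exact (main (kerK_memLp x)).congr fun n => ((hn n).eq_J x).symm
  · let W : ℕ → Lp ℝ 2 (volume : Measure ℝ) := fun n => (hn n).memLp_w.toLp _
    obtain ⟨C, hC⟩ := banach_steinhaus (g := fun n => innerSL ℝ (W n)) (by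
      intro f
      have h1 := main (Lp.memLp f)
      obtain ⟨C, hC⟩ := (Metric.isBounded_range_of_tendsto _ h1).exists_norm_le
      refine ⟨C, fun n => ?_⟩
      have : ‖∫ x, f x * (un n x + deriv (un n) x)‖ ≤ C := hC _ ⟨n, rfl⟩
      rw [← inner_toLp (Lp.memLp f) (hn n).memLp_w, Lp.toLp_coeFn] at this
      rw [innerSL_apply_apply, real_inner_comm]
      exact this)
    refine ⟨C, fun n x => ?_⟩
    rw [(hn n).eq_J x]
    refine (J_bound (hn n).memLp_w x).trans ?_
    have := hC n
    rwa [innerSL_apply_norm] at this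

/-- **Continuity of the measure term under weak `H¹` convergence.** For `V = V₀ + V₁` with
`V₀ ∈ L^∞(ℝ)`, `ess inf V₀ > 0`, and `V₁` a finite signed Radon measure: if `u_n → u`
weakly in `H¹(ℝ)`, then `∫_ℝ |u_n|² dV₁ → ∫_ℝ |u|² dV₁`. -/
theorem measure_term_continuous (V₀ : ℝ → ℝ) (hV₀ : MemLp V₀ ⊤ (volume : Measure ℝ))
    (hpos : 0 < essInf V₀ (volume : Measure ℝ)) (V₁ : SignedMeasure ℝ)
    (un : ℕ → ℝ → ℝ) (u : ℝ → ℝ) (hw : WeakH1Tendsto un u) :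
    Filter.Tendsto (fun n => sMeasInt V₁ (fun x => (un n x) ^ 2)) Filter.atTop
      (𝓝 (sMeasInt V₁ (fun x => (u x) ^ 2))) := by
  obtain ⟨hp, C, hC⟩ := weak_bound hw
  have key : ∀ (μ : Measure ℝ) [IsFiniteMeasure μ],
      Tendsto (fun n => ∫ x, (un n x) ^ 2 ∂μ) atTop (𝓝 (∫ x, (u x) ^ 2 ∂μ)) := by
    intro μ _
    refine tendsto_integral_of_dominated_convergence (fun _ => C ^ 2)
      (fun n => ((hw.1 n).1.pow 2).aestronglyMeasurable) (integrable_const _)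
      (fun n => Eventually.of_forall fun x => ?_) (Eventually.of_forall fun x => (hp x).pow 2)
    rw [norm_of_nonneg (sq_nonneg _)]
    exact sq_le_sq' (abs_le.1 (hC n x)).1 (abs_le.1 (hC n x)).2
  exact (key _).sub (key _)
end

section
/- Let V = V₀ + V₁ where V₀ ∈ L^∞(ℝ) with ess inf V₀ > 0 and V₁ is a signed Radon measure on ℝ with finite total variation. Then for each a ∈ ℝ, there exists u_a ∈ K_a such that I(u_a;V) = min{ I(u;V) : u ∈ K_a }, i.e., the infimum F(a;V) is attained. -/
open MeasureTheory Filter Real Topology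

lemma sq_int {f : ℝ → ℝ} (hf : MemLp f 2 (volume : Measure ℝ)) :
    Integrable (fun x => (f x)^2) (volume : Measure ℝ) := hf.integrable_sq

lemma mul_int {f h : ℝ → ℝ} (hf : MemLp f 2 (volume : Measure ℝ))
    (hh : MemLp h 2 (volume : Measure ℝ)) :
    Integrable (fun x => f x * h x) (volume : Measure ℝ) := hf.integrable_mul hh

lemma memLp_loc {f : ℝ → ℝ} (hf : MemLp f 2 (volume : Measure ℝ)) :
    LocallyIntegrable f volume := hf.locallyIntegrable (by norm_num)

lemma memLp_ii {f : ℝ → ℝ} (hf : MemLp f 2 (volume : Measure ℝ)) (x y : ℝ) :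
    IntervalIntegrable f volume x y :=
  intervalIntegrable_iff.mpr <|
    ((memLp_loc hf).integrableOn_isCompact isCompact_uIcc).mono_set Set.uIoc_subset_uIcc

lemma weak_seq (g : ℕ → ℝ → ℝ) (hg : ∀ n, MemLp (g n) 2 (volume : Measure ℝ)) (C : ℝ)
    (hC : ∀ n, ∫ x, (g n x)^2 ≤ C) :
    ∃ G : ℝ → ℝ, MemLp G 2 (volume : Measure ℝ) ∧ ∃ φ : ℕ → ℕ, StrictMono φ ∧
      ∀ h : ℝ → ℝ, MemLp h 2 (volume : Measure ℝ) →
        Tendsto (fun n => ∫ x, g (φ n) x * h x) atTop (𝓝 (∫ x, G x * h x)) := by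
  have inner_eq : ∀ (f h : Lp ℝ 2 (volume : Measure ℝ)), inner ℝ f h = ∫ x, f x * h x := by
    intro f h
    rw [L2.inner_def]
    congr 1
    ext x
    simp [mul_comm]
  let v : ℕ → Lp ℝ 2 (volume : Measure ℝ) := fun n => (hg n).toLp (g n)
  have hv : ∀ n, ‖v n‖ ≤ Real.sqrt C := by
    intro n
    apply Real.le_sqrt_of_sq_le
    rw [← real_inner_self_eq_norm_sq, inner_eq]
    refine le_trans (le_of_eq ?_) (hC n)
    apply integral_congr_ae
    filter_upwards [(hg n).coeFn_toLp] with x hx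
    simp only [v, hx]; ring
  let T := InnerProductSpace.toDual ℝ (Lp ℝ 2 (volume : Measure ℝ))
  have : Fact ((2 : ENNReal) ≠ ⊤) := ⟨by norm_num⟩
  have hsc := WeakDual.isSeqCompact_closedBall ℝ (Lp ℝ 2 (volume : Measure ℝ)) 0 (Real.sqrt C)
  obtain ⟨y, -, φ, hφ, hlim⟩ := hsc (x := fun n => StrongDual.toWeakDual (T (v n))) (by
    intro n
    simp only [Set.mem_preimage, mem_closedBall_zero_iff]
    have : ‖T (v n)‖ ≤ Real.sqrt C := by
      rw [LinearIsometryEquiv.norm_map]; exact hv n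
    exact this)
  let G := T.symm (WeakDual.toStrongDual y)
  refine ⟨G, Lp.memLp G, φ, hφ, fun h hh => ?_⟩
  have h1 : Tendsto (fun n => (StrongDual.toWeakDual (T (v (φ n)))) (hh.toLp h)) atTop
      (𝓝 (y (hh.toLp h))) :=
    ((WeakDual.eval_continuous (hh.toLp h)).tendsto y).comp hlim
  have h2 : y (hh.toLp h) = ∫ x, G x * h x := by
    have : y (hh.toLp h) = (T G) (hh.toLp h) := by
      simp only [G, LinearIsometryEquiv.apply_symm_apply]; rfl
    rw [this]
    have : (T G) (hh.toLp h) = inner ℝ G (hh.toLp h) := rfl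
    rw [this, inner_eq]
    apply integral_congr_ae
    filter_upwards [hh.coeFn_toLp] with x hx
    simp only [hx]
  rw [← h2]
  refine h1.congr fun n => ?_
  have : (StrongDual.toWeakDual (T (v (φ n)))) (hh.toLp h) = inner ℝ (v (φ n)) (hh.toLp h) := rfl
  rw [this, inner_eq]
  apply integral_congr_ae
  filter_upwards [hh.coeFn_toLp, (hg (φ n)).coeFn_toLp] with x hx hx2
  simp only [v, hx, hx2]

lemma deriv_ae {u g : ℝ → ℝ} (hg : MemLp g 2 (volume : Measure ℝ))
    (hu : ∀ x : ℝ, u x = u 0 + ∫ t in (0:ℝ)..x, g t) : deriv u =ᵐ[volume] g := by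
  filter_upwards [LocallyIntegrable.ae_hasDerivAt_integral (memLp_loc hg)] with x hx
  have : u = fun x => u 0 + ∫ t in (0:ℝ)..x, g t := funext hu
  rw [this]
  exact ((hx 0).const_add _).deriv

lemma supNorm_one {u : ℝ → ℝ} {a : ℝ} (ha : u a = 1) (h : ∀ x, |u x| ≤ 1) : supNorm u = 1 := by
  apply le_antisymm (ciSup_le h)
  have := le_ciSup (f := fun x => |u x|) ⟨1, by rintro _ ⟨x, rfl⟩; exact h x⟩ a
  simpa [ha] using this

lemma h1_bdd {u : ℝ → ℝ} (h : supNorm u = 1) : ∀ x, |u x| ≤ 1 := by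
  by_cases hb : BddAbove (Set.range fun x => |u x|)
  · intro x
    rw [← h]
    exact le_ciSup hb x
  · have : supNorm u = 0 := Real.iSup_of_not_bddAbove hb
    linarith

lemma Ka_nonempty (a : ℝ) : ∃ u, InKa a u := by
  let u : ℝ → ℝ := fun x => max 0 (1 - |x - a|)
  let g : ℝ → ℝ := fun x => (Set.Ioo (a-1) a).indicator 1 x - (Set.Ioo a (a+1)).indicator 1 x
  have hc : Continuous u := by fun_prop
  have hg : MemLp g 2 (volume : Measure ℝ) :=
    (memLp_indicator_const 2 measurableSet_Ioo (1:ℝ) (Or.inr (by simp))).sub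
      (memLp_indicator_const 2 measurableSet_Ioo (1:ℝ) (Or.inr (by simp)))
  have hsupp : HasCompactSupport u := by
    apply HasCompactSupport.intro (isCompact_Icc (a := a-1) (b := a+1))
    intro x hx
    simp only [u]
    apply max_eq_left
    by_contra! hcon
    apply hx
    have := abs_lt.1 (show |x - a| < 1 by linarith)
    constructor <;> linarith
  refine ⟨u, ⟨hc, hc.memLp_of_hasCompactSupport hsupp, g, hg, ?_⟩, by simp [u], ?_⟩
  · intro x
    have key := MeasureTheory.integral_eq_of_hasDerivAt_off_countable u g (a := 0) (b := x)
      (s := {a-1, a, a+1}) (by simp [Set.countable_insert]) hc.continuousOn ?_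
      (memLp_ii hg _ _)
    · rw [key]; ring
    rintro y ⟨-, hy⟩
    simp only [Set.mem_insert_iff, Set.mem_singleton_iff, not_or] at hy
    obtain ⟨h1, h2, h3⟩ := hy
    rcases lt_or_gt_of_ne h1 with h1 | h1
    · have e : u =ᶠ[𝓝 y] fun _ => 0 := by
        filter_upwards [Iio_mem_nhds h1] with z hz
        simp only [Set.mem_Iio] at hz
        apply max_eq_left
        rw [abs_of_neg (by linarith)]; linarith
      have : g y = 0 := by
        simp only [g]
        rw [Set.indicator_of_notMem, Set.indicator_of_notMem] <;> simp <;> intros <;> linarith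
      rw [this]
      exact (hasDerivAt_const y (0:ℝ)).congr_of_eventuallyEq e
    rcases lt_or_gt_of_ne h2 with h2 | h2
    · have e : u =ᶠ[𝓝 y] fun z => 1 + (z - a) := by
        filter_upwards [Ioo_mem_nhds h1 h2] with z hz
        simp only [Set.mem_Ioo] at hz
        simp only [u]
        rw [abs_of_neg (by linarith), max_eq_right (by linarith)]; ring
      have : g y = 1 := by
        simp only [g]
        rw [Set.indicator_of_mem (s := Set.Ioo (a-1) a) ⟨h1, h2⟩, Set.indicator_of_notMem] <;> simp <;> intros <;> linarith
      rw [this]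
      exact (((hasDerivAt_id y).sub_const a).const_add 1).congr_of_eventuallyEq e
    rcases lt_or_gt_of_ne h3 with h3 | h3
    · have e : u =ᶠ[𝓝 y] fun z => 1 - (z - a) := by
        filter_upwards [Ioo_mem_nhds h2 h3] with z hz
        simp only [Set.mem_Ioo] at hz
        simp only [u]
        rw [abs_of_pos (by linarith), max_eq_right (by linarith)]
      have : g y = -1 := by
        simp only [g]
        rw [Set.indicator_of_mem (s := Set.Ioo a (a+1)) ⟨h2, h3⟩, Set.indicator_of_notMem] <;> simp <;> intros <;> linarith
      rw [this]
      exact (((hasDerivAt_id y).sub_const a).const_sub 1).congr_of_eventuallyEq e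
    · have e : u =ᶠ[𝓝 y] fun _ => 0 := by
        filter_upwards [Ioi_mem_nhds h3] with z hz
        simp only [Set.mem_Ioi] at hz
        apply max_eq_left
        rw [abs_of_pos (by linarith)]; linarith
      have : g y = 0 := by
        simp only [g]
        rw [Set.indicator_of_notMem, Set.indicator_of_notMem] <;> simp <;> intros <;> linarith
      rw [this]
      exact (hasDerivAt_const y (0:ℝ)).congr_of_eventuallyEq e
  · apply supNorm_one (a := a) (by simp [u])
    intro x
    simp only [u]
    rw [abs_of_nonneg (le_max_left _ _)]
    apply max_le zero_le_one
    linarith [abs_nonneg (x - a)]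

lemma V0u2_int {V₀ u : ℝ → ℝ} (hV₀ : MemLp V₀ ⊤ (volume : Measure ℝ))
    (hu : Integrable (fun x => (u x)^2) (volume : Measure ℝ)) :
    Integrable (fun x => V₀ x * (u x)^2) (volume : Measure ℝ) :=
  hu.essSup_smul hV₀.1 hV₀.2.ne

lemma Itot_eq {V₀ u g : ℝ → ℝ} (V₁ : SignedMeasure ℝ) (hV₀ : MemLp V₀ ⊤ (volume : Measure ℝ))
    (hu2 : Integrable (fun x => (u x)^2) (volume : Measure ℝ))
    (hg : MemLp g 2 (volume : Measure ℝ))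
    (hu : ∀ x : ℝ, u x = u 0 + ∫ t in (0:ℝ)..x, g t) :
    Itot V₀ V₁ u = (∫ x, (g x)^2) + (∫ x, V₀ x * (u x)^2) + sMeasInt V₁ (fun x => (u x)^2) := by
  unfold Itot
  rw [← integral_add (sq_int hg) (V0u2_int hV₀ hu2)]
  congr 1
  apply integral_congr_ae
  filter_upwards [deriv_ae hg hu] with x hx
  rw [hx]

lemma V0_lower {V₀ : ℝ → ℝ} (hV₀ : MemLp V₀ ⊤ (volume : Measure ℝ)) :
    ∀ᵐ x, essInf V₀ (volume : Measure ℝ) ≤ V₀ x := by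
  apply ae_essInf_le
  refine ⟨-(eLpNormEssSup V₀ volume).toReal, ?_⟩
  rw [eventually_map]
  have hfin : eLpNormEssSup V₀ volume ≠ ⊤ := by
    have := hV₀.2; rw [eLpNorm_exponent_top] at this; exact this.ne
  filter_upwards [ae_le_eLpNormEssSup (f := V₀) (μ := volume)] with x hx
  have h2 : ‖V₀ x‖ ≤ (eLpNormEssSup V₀ volume).toReal := by
    rw [← toReal_enorm]; exact ENNReal.toReal_mono hfin hx
  rw [Real.norm_eq_abs] at h2
  have := neg_abs_le (V₀ x)
  show _ ≤ _
  linarith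

lemma meas_bound (μ : Measure ℝ) [IsFiniteMeasure μ] {u : ℝ → ℝ} (h : ∀ x, |u x| ≤ 1) :
    ∫ x, (u x)^2 ∂μ ≤ μ.real Set.univ := by
  have := norm_integral_le_of_norm_le_const (μ := μ) (f := fun x => (u x)^2) (C := 1)
    (Eventually.of_forall fun x => by simpa [abs_le_one_iff_mul_self_le_one, sq] using h x)
  simpa using (le_abs_self _).trans this

lemma meas_lim (μ : Measure ℝ) [IsFiniteMeasure μ] {u : ℕ → ℝ → ℝ} {w : ℝ → ℝ}
    (hc : ∀ n, Continuous (u n)) (h : ∀ n x, |u n x| ≤ 1)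
    (hl : ∀ x, Tendsto (fun n => u n x) atTop (𝓝 (w x))) :
    Tendsto (fun n => ∫ x, (u n x)^2 ∂μ) atTop (𝓝 (∫ x, (w x)^2 ∂μ)) := by
  apply tendsto_integral_of_dominated_convergence (fun _ => 1)
  · intro n; exact ((hc n).pow 2).aestronglyMeasurable
  · exact integrable_const _
  · intro n
    exact Eventually.of_forall fun x => by
      simpa [abs_le_one_iff_mul_self_le_one, sq] using h n x
  · exact Eventually.of_forall fun x => (hl x).pow 2

/-- Signed indicator of the interval from `a` to `x`. -/
noncomputable def sgnInd (a x : ℝ) : ℝ → ℝ :=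
  fun t => (Set.Ioc a x).indicator 1 t - (Set.Ioc x a).indicator 1 t

lemma sgnInd_memLp (a x : ℝ) : MemLp (sgnInd a x) 2 (volume : Measure ℝ) :=
  (memLp_indicator_const 2 measurableSet_Ioc (1:ℝ) (Or.inr (by simp))).sub
      (memLp_indicator_const 2 measurableSet_Ioc (1:ℝ) (Or.inr (by simp)))

lemma sgnInd_int {f : ℝ → ℝ} (hf : MemLp f 2 (volume : Measure ℝ)) (a x : ℝ) :
    ∫ t, f t * sgnInd a x t = ∫ t in a..x, f t := by
  have h1 : ∀ p q : ℝ, IntegrableOn f (Set.Ioc p q) volume := fun p q =>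
    ((memLp_loc hf).integrableOn_isCompact isCompact_Icc).mono_set Set.Ioc_subset_Icc_self
  rw [intervalIntegral, ← integral_indicator measurableSet_Ioc,
    ← integral_indicator measurableSet_Ioc, ← integral_sub
      ((h1 a x).integrable_indicator measurableSet_Ioc)
      ((h1 x a).integrable_indicator measurableSet_Ioc)]
  congr 1
  ext t
  simp only [sgnInd, mul_sub, Set.indicator_apply]
  simp

lemma V0_nonneg_int {V₀ u : ℝ → ℝ} (hV₀ : MemLp V₀ ⊤ (volume : Measure ℝ))
    (hpos : 0 < essInf V₀ (volume : Measure ℝ)) : 0 ≤ ∫ x, V₀ x * (u x)^2 := by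
  apply integral_nonneg_of_ae
  filter_upwards [V0_lower hV₀] with x hx
  have : 0 ≤ V₀ x := by linarith
  simp only [Pi.zero_apply]; positivity

theorem F_attained (V₀ : ℝ → ℝ) (hV₀ : MemLp V₀ ⊤ (volume : Measure ℝ))
    (hpos : 0 < essInf V₀ (volume : Measure ℝ)) (V₁ : SignedMeasure ℝ) (a : ℝ) :
    ∃ ua : ℝ → ℝ, InKa a ua ∧
      (∀ u : ℝ → ℝ, InKa a u → Itot V₀ V₁ ua ≤ Itot V₀ V₁ u) ∧
      Itot V₀ V₁ ua = sInf {r : ℝ | ∃ u : ℝ → ℝ, InKa a u ∧ r = Itot V₀ V₁ u} := by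
  set S := {r : ℝ | ∃ u : ℝ → ℝ, InKa a u ∧ r = Itot V₀ V₁ u} with hS
  let M := V₁.toJordanDecomposition.negPart.real Set.univ
  have hsm : ∀ u : ℝ → ℝ, (∀ x, |u x| ≤ 1) → -M ≤ sMeasInt V₁ (fun x => (u x)^2) := by
    intro u hu
    have h1 := meas_bound V₁.toJordanDecomposition.negPart hu
    have h2 : 0 ≤ ∫ x, (u x)^2 ∂V₁.toJordanDecomposition.posPart :=
      integral_nonneg fun x => sq_nonneg _
    unfold sMeasInt
    linarith
  have hbelow : ∀ u g : ℝ → ℝ, InKa a u → MemLp g 2 (volume : Measure ℝ) →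
      (∀ x : ℝ, u x = u 0 + ∫ t in (0:ℝ)..x, g t) → ∫ x, (g x)^2 ≤ Itot V₀ V₁ u + M := by
    intro u g hu hg hug
    rw [Itot_eq V₁ hV₀ (sq_int hu.1.2.1) hg hug]
    have h1 := hsm u (h1_bdd hu.2.2)
    have h2 := V0_nonneg_int (u := u) hV₀ hpos
    linarith
  have hbdd : BddBelow S := by
    refine ⟨-M, ?_⟩
    rintro r ⟨u, hu, rfl⟩
    obtain ⟨g, hg, hug⟩ := hu.1.2.2
    have h1 := hbelow u g hu hg hug
    have h2 : 0 ≤ ∫ x, (g x)^2 := integral_nonneg fun x => sq_nonneg _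
    linarith
  have hne : S.Nonempty := by
    obtain ⟨u, hu⟩ := Ka_nonempty a
    exact ⟨_, u, hu, rfl⟩
  suffices hmain : ∃ w, InKa a w ∧ Itot V₀ V₁ w ≤ sInf S by
    obtain ⟨w, hw, hle⟩ := hmain
    refine ⟨w, hw, fun u hu => hle.trans (csInf_le hbdd ⟨u, hu, rfl⟩),
      le_antisymm hle (csInf_le hbdd ⟨w, hw, rfl⟩)⟩
  obtain ⟨r, -, hrlim, hrmem⟩ := exists_seq_tendsto_sInf hne hbdd
  choose u huK hru using hrmem
  have := fun n => (huK n).1.2.2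
  choose g hg hug using this
  obtain ⟨R, hR⟩ := hrlim.bddAbove_range
  obtain ⟨G, hG, φ, hφ, hweak⟩ := weak_seq g hg (R + M) (fun n => by
    have h1 := hbelow (u n) (g n) (huK n) (hg n) (hug n)
    have h2 := hR ⟨n, rfl⟩
    rw [hru n] at h2
    linarith)
  have hub : ∀ n x, |u n x| ≤ 1 := fun n => h1_bdd (huK n).2.2
  have huc : ∀ n, Continuous (u n) := fun n => (huK n).1.1
  let w : ℝ → ℝ := fun x => 1 + ∫ t in a..x, G t
  have hua : ∀ n x, u n x = 1 + ∫ t in a..x, g n t := by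
    intro n x
    have h1 := intervalIntegral.integral_add_adjacent_intervals (memLp_ii (hg n) 0 a)
      (memLp_ii (hg n) a x)
    have h2 := hug n x
    have h3 := hug n a
    have h4 := (huK n).2.1
    linarith
  have hlim : ∀ x, Tendsto (fun n => u (φ n) x) atTop (𝓝 (w x)) := by
    intro x
    have h := (hweak _ (sgnInd_memLp a x)).const_add 1
    rw [sgnInd_int hG] at h
    refine h.congr fun n => ?_
    rw [sgnInd_int (hg _), hua]
  have hwb : ∀ x, |w x| ≤ 1 := fun x =>
    le_of_tendsto ((hlim x).abs) (Eventually.of_forall fun n => hub _ x)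
  have hwa : w a = 1 := by simp [w]
  have hwc : Continuous w :=
    continuous_const.add (intervalIntegral.continuous_primitive (fun x y => memLp_ii hG x y) a)
  have hw0 : ∀ x, w x = w 0 + ∫ t in (0:ℝ)..x, G t := by
    intro x
    have h1 := intervalIntegral.integral_add_adjacent_intervals (memLp_ii hG a 0)
      (memLp_ii hG 0 x)
    simp only [w]
    linarith
  -- the measure term
  have hSlim : Tendsto (fun n => sMeasInt V₁ (fun x => (u (φ n) x)^2)) atTop
      (𝓝 (sMeasInt V₁ (fun x => (w x)^2))) :=
    (meas_lim _ (fun n => huc (φ n)) (fun n => hub _) hlim).sub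
      (meas_lim _ (fun n => huc (φ n)) (fun n => hub _) hlim)
  have hVloc : LocallyIntegrable V₀ volume := hV₀.locallyIntegrable (by norm_num)
  have hVint : ∀ p q : ℝ, IntegrableOn V₀ (Set.Ioc p q) volume := fun p q =>
    (hVloc.integrableOn_isCompact isCompact_Icc).mono_set Set.Ioc_subset_Icc_self
  have hVlim : ∀ p q : ℝ, Tendsto (fun n => ∫ x in Set.Ioc p q, V₀ x * (u (φ n) x)^2) atTop
      (𝓝 (∫ x in Set.Ioc p q, V₀ x * (w x)^2)) := by
    intro p q
    apply tendsto_integral_of_dominated_convergence (fun x => ‖V₀ x‖)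
    · intro n
      exact (hVint p q).1.mul ((huc _).pow 2).aestronglyMeasurable
    · exact (hVint p q).norm
    · intro n
      refine Eventually.of_forall fun x => ?_
      rw [norm_mul]
      apply mul_le_of_le_one_right (norm_nonneg _)
      simpa [abs_le_one_iff_mul_self_le_one, sq] using hub (φ n) x
    · exact Eventually.of_forall fun x => ((hlim x).pow 2).const_mul _
  have hkey : ∀ p q : ℝ, (∫ x, (G x)^2) + (∫ x in Set.Ioc p q, V₀ x * (w x)^2) +
      sMeasInt V₁ (fun x => (w x)^2) ≤ sInf S := by
    intro p q
    have hL := ((((hweak G hG).const_mul 2).sub_const (∫ x, (G x)^2)).add (hVlim p q)).add hSlim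
    have hGG : ∫ x, G x * G x = ∫ x, (G x)^2 := by congr 1; ext x; ring
    have e : 2 * (∫ x, G x * G x) - ∫ x, (G x)^2 = ∫ x, (G x)^2 := by rw [hGG]; ring
    rw [e] at hL
    refine le_of_tendsto_of_tendsto' hL (hrlim.comp hφ.tendsto_atTop) fun n => ?_
    simp only [Function.comp_apply]
    have hu2 := sq_int (huK (φ n)).1.2.1
    rw [hru, Itot_eq V₁ hV₀ hu2 (hg _) (hug _)]
    have h1 : ∫ x in Set.Ioc p q, V₀ x * (u (φ n) x)^2 ≤ ∫ x, V₀ x * (u (φ n) x)^2 := by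
      apply setIntegral_le_integral (V0u2_int hV₀ hu2)
      filter_upwards [V0_lower hV₀] with x hx
      have : 0 ≤ V₀ x := by linarith
      simp only [Pi.zero_apply]; positivity
    have h2 : 2 * (∫ x, g (φ n) x * G x) - ∫ x, (G x)^2 ≤ ∫ x, (g (φ n) x)^2 := by
      rw [← integral_const_mul, ← integral_sub ((mul_int (hg _) hG).const_mul 2) (sq_int hG)]
      apply integral_mono (((mul_int (hg _) hG).const_mul 2).sub (sq_int hG)) (sq_int (hg _))
      intro x
      simp only [Pi.sub_apply]
      nlinarith [sq_nonneg (g (φ n) x - G x)]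
    linarith
  -- integrability of w ^ 2
  set c := essInf V₀ (volume : Measure ℝ) with hc
  have hwint : Integrable (fun x => (w x)^2) (volume : Measure ℝ) := by
    have hloc : ∀ p q : ℝ, IntegrableOn (fun x => (w x)^2) (Set.Ioc p q) volume := fun p q =>
      ((hwc.pow 2).locallyIntegrable.integrableOn_isCompact isCompact_Icc).mono_set
        Set.Ioc_subset_Icc_self
    refine integrable_of_intervalIntegral_norm_bounded (ι := ℕ) (l := atTop)
      (a := fun n => -(n:ℝ)) (b := fun n => (n:ℝ))
      ((sInf S - (∫ x, (G x)^2) - sMeasInt V₁ (fun x => (w x)^2)) / c) (fun n => hloc _ _)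
      (tendsto_neg_atTop_atBot.comp tendsto_natCast_atTop_atTop)
      tendsto_natCast_atTop_atTop (Eventually.of_forall fun n => ?_)
    rw [intervalIntegral.integral_of_le (by have := Nat.cast_nonneg (α := ℝ) n; linarith),
      le_div_iff₀ hpos]
    have h1 := hkey (-(n:ℝ)) n
    have h2 : (∫ x in Set.Ioc (-(n:ℝ)) n, ‖(w x)^2‖) * c ≤
        ∫ x in Set.Ioc (-(n:ℝ)) n, V₀ x * (w x)^2 := by
      rw [← integral_mul_const]
      apply integral_mono_ae ((hloc _ _).norm.mul_const c)
      · refine Integrable.mono' (hVint _ _).norm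
          ((hVint _ _).1.mul (hwc.pow 2).aestronglyMeasurable) ?_
        refine Eventually.of_forall fun x => ?_
        rw [norm_mul]
        apply mul_le_of_le_one_right (norm_nonneg _)
        simpa [abs_le_one_iff_mul_self_le_one, sq] using hwb x
      · filter_upwards [ae_restrict_of_ae (V0_lower hV₀)] with x hx
        rw [Real.norm_of_nonneg (sq_nonneg _), mul_comm]
        exact mul_le_mul_of_nonneg_right hx (sq_nonneg _)
    linarith
  have hwmem : MemLp w 2 (volume : Measure ℝ) :=
    (memLp_two_iff_integrable_sq hwc.aestronglyMeasurable).2 hwint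
  refine ⟨w, ⟨⟨hwc, hwmem, G, hG, hw0⟩, hwa, supNorm_one hwa hwb⟩, ?_⟩
  rw [Itot_eq V₁ hV₀ hwint hG hw0]
  have hT : Tendsto (fun n : ℕ => ∫ x in (-(n:ℝ))..n, V₀ x * (w x)^2) atTop
      (𝓝 (∫ x, V₀ x * (w x)^2)) :=
    intervalIntegral_tendsto_integral (V0u2_int hV₀ hwint)
      (tendsto_neg_atTop_atBot.comp tendsto_natCast_atTop_atTop) tendsto_natCast_atTop_atTop
  refine le_of_tendsto ((hT.const_add (∫ x, (G x)^2)).add_const _)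
    (Eventually.of_forall fun n => ?_)
  rw [intervalIntegral.integral_of_le (by have := Nat.cast_nonneg (α := ℝ) n; linarith)]
  exact hkey _ _
end

section
/- Let V = V₀ + V₁ where V₀ ∈ L^∞(ℝ) and V₁ is a signed Radon measure on ℝ with finite total variation, and let u ∈ H¹(ℝ). Then lim_{h→0} I(u(·−h);V) = I(u;V), where u(·−h) denotes the translate x ↦ u(x−h). -/
open MeasureTheory Filter Real Topology

lemma isH1_bdd (u : ℝ → ℝ) (hu : IsH1 u) : ∃ M : ℝ, ∀ x, |u x| ≤ M := by
  obtain ⟨hc, hL, u', hL', hu'⟩ := hu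
  have h1 : Integrable (fun x => u x ^ 2) := hL.integrable_sq
  have h2 : Integrable (fun x => u' x ^ 2) := hL'.integrable_sq
  have hloc : ∀ a b, IntervalIntegrable u' volume a b := fun a b =>
    ((hL'.locallyIntegrable (by norm_num)).integrableOn_isCompact isCompact_uIcc).intervalIntegrable
  have hle : ∀ g : ℝ → ℝ, Integrable (fun x => g x ^ 2) → ∀ a b, a ≤ b →
      ∫ t in a..b, g t ^ 2 ≤ ∫ t, g t ^ 2 := by
    intro g hg a b hab
    rw [intervalIntegral.integral_of_le hab]
    exact setIntegral_le_integral hg (Eventually.of_forall fun x => sq_nonneg _)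
  have habs : ∀ a : ℝ, |a| ≤ 1 + a ^ 2 := fun a => by
    rw [← sq_abs]; nlinarith [sq_nonneg (|a| - 1), sq_nonneg (|a|)]
  refine ⟨(1 + ∫ t, u t ^ 2) + (1 + ∫ t, u' t ^ 2), fun x => ?_⟩
  have key : ∀ y ∈ Set.Icc x (x + 1), |u x| ≤ (1 + u y ^ 2) + (1 + ∫ t, u' t ^ 2) := by
    intro y hy
    have e : u y - u x = ∫ t in x..y, u' t := by
      rw [hu' y, hu' x, ← intervalIntegral.integral_interval_sub_left (hloc 0 y) (hloc 0 x)]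
      ring
    have e2 : |u y - u x| ≤ 1 + ∫ t, u' t ^ 2 := by
      rw [e]
      calc |∫ t in x..y, u' t| ≤ ∫ t in x..y, |u' t| :=
            intervalIntegral.abs_integral_le_integral_abs hy.1
        _ ≤ ∫ t in x..y, (1 + u' t ^ 2) :=
            intervalIntegral.integral_mono_on hy.1 (hloc x y).abs
              (intervalIntegrable_const.add h2.intervalIntegrable) (fun t _ => habs _)
        _ = (y - x) + ∫ t in x..y, u' t ^ 2 := by
            rw [intervalIntegral.integral_add intervalIntegrable_const h2.intervalIntegrable]
            simp
        _ ≤ 1 + ∫ t, u' t ^ 2 := by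
            have := hle u' h2 x y hy.1
            linarith [hy.2]
    have e3 : |u x| ≤ |u y| + |u y - u x| := by
      have := abs_sub_abs_le_abs_sub (u x) (u y)
      rw [abs_sub_comm] at this; linarith
    linarith [habs (u y)]
  have hi : IntervalIntegrable (fun y => (1 + u y ^ 2) + (1 + ∫ t, u' t ^ 2)) volume x (x+1) :=
    (intervalIntegrable_const.add h1.intervalIntegrable).add intervalIntegrable_const
  have := intervalIntegral.integral_mono_on (by linarith : x ≤ x + 1)
    (intervalIntegrable_const (c := |u x|) (μ := volume)) hi key
  rw [intervalIntegral.integral_add (intervalIntegrable_const.add h1.intervalIntegrable)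
    intervalIntegrable_const,
    intervalIntegral.integral_add intervalIntegrable_const h1.intervalIntegrable] at this
  simp at this
  have := hle u h1 x (x+1) (by linarith)
  linarith

lemma tendsto_fin (μ : Measure ℝ) [IsFiniteMeasure μ] (u : ℝ → ℝ) (hc : Continuous u)
    (M : ℝ) (hM : ∀ x, |u x| ≤ M) :
    Tendsto (fun h : ℝ => ∫ x, u (x - h) ^ 2 ∂μ) (𝓝 0) (𝓝 (∫ x, u x ^ 2 ∂μ)) := by
  refine tendsto_integral_filter_of_dominated_convergence (fun _ => M ^ 2) ?_ ?_ ?_ ?_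
  · exact Eventually.of_forall fun h => (by fun_prop : Continuous _).aestronglyMeasurable
  · refine Eventually.of_forall fun h => Eventually.of_forall fun x => ?_
    rw [Real.norm_eq_abs, abs_of_nonneg (sq_nonneg _), ← sq_abs]
    exact pow_le_pow_left₀ (abs_nonneg _) (hM _) 2
  · exact integrable_const _
  · refine Eventually.of_forall fun x => ?_
    have : Continuous fun h : ℝ => u (x - h) ^ 2 := by fun_prop
    simpa using this.tendsto 0

lemma tendsto_L1 (f : ℝ → ℝ) (hc : Continuous f) (h0 : ∀ x, 0 ≤ f x) (hf : Integrable f) :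
    Tendsto (fun h : ℝ => ∫ x, |f (x - h) - f x|) (𝓝 0) (𝓝 0) := by
  have hmin : Tendsto (fun h : ℝ => ∫ x, min (f (x - h)) (f x)) (𝓝 0) (𝓝 (∫ x, f x)) := by
    refine tendsto_integral_filter_of_dominated_convergence f ?_ ?_ hf ?_
    · exact Eventually.of_forall fun h => (by fun_prop : Continuous _).aestronglyMeasurable
    · refine Eventually.of_forall fun h => Eventually.of_forall fun x => ?_
      rw [Real.norm_eq_abs, abs_of_nonneg (le_min (h0 _) (h0 _))]
      exact min_le_right _ _
    · refine Eventually.of_forall fun x => ?_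
      have : Continuous fun h : ℝ => min (f (x - h)) (f x) := by fun_prop
      simpa using this.tendsto 0
  have heq : ∀ h : ℝ, ∫ x, |f (x - h) - f x| =
      2 * (∫ x, f x) - 2 * ∫ x, min (f (x - h)) (f x) := by
    intro h
    have hfh : Integrable fun x => f (x - h) := hf.comp_sub_right h
    have hm : Integrable fun x => min (f (x - h)) (f x) := hfh.inf hf
    have : ∀ x, |f (x - h) - f x| = (f (x - h) + f x) - 2 * min (f (x - h)) (f x) := by
      intro x
      rcases le_total (f (x - h)) (f x) with h | h
      · rw [min_eq_left h, abs_of_nonpos (by linarith)]; ring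
      · rw [min_eq_right h, abs_of_nonneg (by linarith)]; ring
    simp_rw [this]
    have hadd : Integrable fun x => f (x - h) + f x := hfh.add hf
    rw [integral_sub hadd (hm.const_mul 2), integral_add hfh hf, integral_const_mul,
      integral_sub_right_eq_self f h]
    ring
  simp_rw [heq]
  have := (tendsto_const_nhds (x := 2 * ∫ x, f x)).sub (hmin.const_mul 2)
  simpa using this

lemma tendsto_pot (V₀ : ℝ → ℝ) (hV₀ : MemLp V₀ ⊤ (volume : Measure ℝ))
    (f : ℝ → ℝ) (hc : Continuous f) (h0 : ∀ x, 0 ≤ f x) (hf : Integrable f) :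
    Tendsto (fun h : ℝ => ∫ x, V₀ x * f (x - h)) (𝓝 0) (𝓝 (∫ x, V₀ x * f x)) := by
  have hint : ∀ g : ℝ → ℝ, Integrable g → Integrable (fun x => V₀ x * g x) :=
    fun g hg => hg.mul_of_top_right hV₀
  obtain ⟨C, hC⟩ : ∃ C : ℝ, ∀ᵐ x, |V₀ x| ≤ C := by
    have := hV₀.2
    rw [eLpNorm_exponent_top] at this
    refine ⟨(eLpNormEssSup V₀ volume).toReal, ?_⟩
    filter_upwards [ae_le_eLpNormEssSup (f := V₀) (μ := volume)] with x hx
    have := (ENNReal.toReal_le_toReal (by simp) this.ne).2 hx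
    simpa using this
  rw [tendsto_iff_norm_sub_tendsto_zero]
  refine squeeze_zero (fun _ => norm_nonneg _) (fun h => ?_)
    (by simpa using (tendsto_L1 f hc h0 hf).const_mul C)
  have hfh : Integrable fun x => f (x - h) := hf.comp_sub_right h
  rw [← integral_sub (hint _ hfh) (hint _ hf), ← integral_const_mul]
  refine norm_integral_le_of_norm_le ((hfh.sub hf).abs.const_mul C) ?_
  filter_upwards [hC] with x hx
  rw [← mul_sub, norm_mul]
  exact mul_le_mul_of_nonneg_right hx (abs_nonneg _)

/-- **Continuity of `I(·;V)` under translations.** For `V = V₀ + V₁` with `V₀ ∈ L^∞(ℝ)`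
and `V₁` a finite signed Radon measure, and `u ∈ H¹(ℝ)`:
`I(u(·-h);V) → I(u;V)` as `h → 0`. -/
theorem Itot_translate_continuous (V₀ : ℝ → ℝ) (hV₀ : MemLp V₀ ⊤ (volume : Measure ℝ))
    (V₁ : SignedMeasure ℝ) (u : ℝ → ℝ) (hu : IsH1 u) :
    Filter.Tendsto (fun h : ℝ => Itot V₀ V₁ (fun x => u (x - h))) (𝓝 0)
      (𝓝 (Itot V₀ V₁ u)) := by
  obtain ⟨M, hM⟩ := isH1_bdd u hu
  have hc := hu.1
  have hsq : Integrable (fun x => u x ^ 2) := hu.2.1.integrable_sq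
  have hint : ∀ g : ℝ → ℝ, Integrable g → Integrable (fun x => V₀ x * g x) :=
    fun g hg => hg.mul_of_top_right hV₀
  unfold Itot sMeasInt
  refine Tendsto.add ?_ ((tendsto_fin _ u hc M hM).sub (tendsto_fin _ u hc M hM))
  have hd : ∀ h x : ℝ, deriv (fun x => u (x - h)) x = deriv u (x - h) := fun h x =>
    deriv_comp_sub_const u h x
  simp_rw [hd]
  by_cases hD : Integrable (fun x => deriv u x ^ 2)
  · have := tendsto_pot V₀ hV₀ (fun x => u x ^ 2) (by fun_prop) (fun _ => sq_nonneg _) hsq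
    have e : ∀ h : ℝ, ∫ x, (deriv u (x - h) ^ 2 + V₀ x * u (x - h) ^ 2) =
        (∫ x, deriv u x ^ 2) + ∫ x, V₀ x * u (x - h) ^ 2 := by
      intro h
      rw [integral_add (hD.comp_sub_right h) (hint _ (hsq.comp_sub_right h)),
        integral_sub_right_eq_self (fun x => deriv u x ^ 2) h]
    simp_rw [e]
    rw [integral_add hD (hint _ hsq)]
    exact tendsto_const_nhds.add this
  · have e : ∀ h : ℝ, ∫ x, (deriv u (x - h) ^ 2 + V₀ x * u (x - h) ^ 2) = 0 := by
      intro h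
      refine integral_undef fun hI => hD ?_
      have h1 : Integrable fun x => deriv u (x - h) ^ 2 := by
        refine (hI.sub (hint _ (hsq.comp_sub_right h))).congr (Eventually.of_forall fun x => ?_)
        simp
      simpa using h1.comp_add_right h
    have e0 := e 0
    simp only [sub_zero] at e0
    simp_rw [e, e0]
    exact tendsto_const_nhds
end
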